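/- arXiv:2210.14668 — 4 statements merged into one kernel-verified Lean document; each statement's English description precedes it below -/
import Mathlib

section
/- For all partitions λ and μ such that (λ+μ)/2 is a partition (i.e., λ_i + μ_i is even for all i), the squared number of standard Young tableaux of shape (λ+μ)/2 is at least the product of the numbers of standard Young tableaux of shapes λ and μ, after padding each partition to size d with a long first row: (f^{((λ+μ)/2)[d]})² ≥ f^{λ[d]} · f^{μ[d]} for all d ≥ max(|λ|+λ₁, |μ|+μ₁). Here ν[d] denotes the partition (d−|ν|, ν₁, ν₂, …). -/
/-- A partition, encoded as a weakly decreasing finitely supported function `ℕ → ℕ`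
(`0`-indexed: `f 0 = λ₁`). -/
def IsPtn (f : ℕ →₀ ℕ) : Prop := ∀ i j : ℕ, i ≤ j → f j ≤ f i

/-- The size `|λ|` of a partition. -/
def psize (f : ℕ →₀ ℕ) : ℕ := f.sum fun _ n => n

/-- `c` is a cell of the Young diagram of the shape `f` (rows indexed `0,1,…`). -/
def cellOf (f : ℕ → ℕ) (c : ℕ × ℕ) : Prop := c.2 < f c.1

/-- `T` is a standard Young tableau of shape `f` with `s` cells: it vanishes outside the
diagram, strictly increases along rows and columns, and is a bijection onto `{1, …, s}`. -/
def IsSYT (f : ℕ → ℕ) (s : ℕ) (T : ℕ × ℕ → ℕ) : Prop :=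
  (∀ c, ¬ cellOf f c → T c = 0) ∧
  (∀ i j, cellOf f (i, j + 1) → T (i, j) < T (i, j + 1)) ∧
  (∀ i j, cellOf f (i + 1, j) → T (i, j) < T (i + 1, j)) ∧
  (∀ c, cellOf f c → 1 ≤ T c ∧ T c ≤ s) ∧
  (∀ m, 1 ≤ m → m ≤ s → ∃! c, cellOf f c ∧ T c = m)

/-- `f^λ`: the number of standard Young tableaux of shape `f` with `s` cells. -/
noncomputable def fSYT (f : ℕ → ℕ) (s : ℕ) : ℕ := Nat.card {T : ℕ × ℕ → ℕ // IsSYT f s T}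

/-- Padding of a shape given as a plain function, with explicit size `s`:
`λ[d] = (d - s, λ₁, λ₂, …)`. -/
def padF (f : ℕ → ℕ) (s d : ℕ) : ℕ → ℕ := fun i => if i = 0 then d - s else f (i - 1)

/-!
Let `β_j = a_{k-1-j} + j` be the beta-numbers of a partition `a` of `d` with at most `k` parts.
Frobenius' formula `f^a = d! ∏_{i<j} (β_j - β_i) / ∏_j β_j!` follows by induction on `d`: deleting
the cell with the largest entry lowers one `β_j` by one, and the branching rule becomes the identity
`∑_j β_j Δ(β - e_j) = (∑_j (β_j - j)) Δ(β)` for the Vandermonde determinant `Δ`, in which the rows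
that do not end in a corner contribute zero. As the `β_j` depend affinely on the partition, passing
to the midpoint of two partitions of `d` raises each difference `β_j - β_i` to at least the
geometric mean, by AM-GM, while log-convexity of the factorial keeps each `β_j!` at or below the
geometric mean.
-/

open Finset Function Matrix
open scoped Nat

section Vandermonde

variable {R : Type*} [CommRing R] {n : ℕ}

lemma mul_eval_descPochhammer_sub_one (n : ℕ) (x : R) :
    x * (descPochhammer R n).eval (x - 1) = (x - n) * (descPochhammer R n).eval x := by
  have hleft := congrArg (Polynomial.eval x) (descPochhammer_succ_left R n)
  have hright := descPochhammer_succ_eval n x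
  simp only [Polynomial.eval_mul, Polynomial.eval_comp, Polynomial.eval_X, Polynomial.eval_sub,
    Polynomial.eval_one] at hleft
  rw [← hleft, hright, mul_comm]

lemma det_vandermonde_eq_sum_prod_descPochhammer [IsDomain R] (v : Fin n → R) :
    (vandermonde v).det =
      ∑ σ : Equiv.Perm (Fin n),
        (σ.sign : R) * ∏ j : Fin n, (descPochhammer R j).eval (v (σ j)) := by
  rw [det_eval_matrixOfPolynomials_eq_det_vandermonde v (fun j => descPochhammer R j)
    (fun j => descPochhammer_natDegree R j) (fun j => monic_descPochhammer R j), det_apply']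
  rfl

lemma mul_prod_descPochhammer_update_sub_one (v : Fin n → R) (i : Fin n) :
    v i * ∏ j : Fin n, (descPochhammer R j).eval (update v i (v i - 1) j) =
      (v i - (i : ℕ)) * ∏ j : Fin n, (descPochhammer R j).eval (v j) := by
  simp only [apply_update (fun j : Fin n => fun x : R => (descPochhammer R j).eval x)]
  rw [prod_update_of_mem (mem_univ i), ← mul_assoc, mul_eval_descPochhammer_sub_one, mul_assoc,
    ← prod_eq_mul_prod_sdiff_singleton_of_mem (mem_univ i) fun j : Fin n =>
      (descPochhammer R j).eval (v j)]

theorem sum_mul_det_vandermonde_update_sub_one [IsDomain R] (v : Fin n → R) :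
    ∑ i, v i * (vandermonde (update v i (v i - 1))).det =
      (∑ i : Fin n, (v i - (i : ℕ))) * (vandermonde v).det := by
  simp only [det_vandermonde_eq_sum_prod_descPochhammer, mul_sum]
  rw [sum_comm]
  refine sum_congr rfl fun σ _ => ?_
  have hterm (i : Fin n) :
      v (σ i) * ∏ j : Fin n, (descPochhammer R j).eval (update v (σ i) (v (σ i) - 1) (σ j)) =
        (v (σ i) - (i : ℕ)) * ∏ j : Fin n, (descPochhammer R j).eval (v (σ j)) := by
    have hcomp := update_comp_eq_of_injective v σ.injective i (v (σ i) - 1)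
    have hmul := mul_prod_descPochhammer_update_sub_one (v ∘ σ) i
    rwa [Function.comp_apply, ← hcomp] at hmul
  calc ∑ i, v i * (σ.sign * ∏ j : Fin n, (descPochhammer R j).eval (update v i (v i - 1) (σ j)))
      = ∑ i, v (σ i) *
          (σ.sign * ∏ j : Fin n, (descPochhammer R j).eval
            (update v (σ i) (v (σ i) - 1) (σ j))) := (Equiv.sum_comp σ _).symm
    _ = ∑ i : Fin n, (v (σ i) - (i : ℕ)) *
          (σ.sign * ∏ j : Fin n, (descPochhammer R j).eval (v (σ j))) := by
        simp only [mul_left_comm _ (σ.sign : R), hterm]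
    _ = _ := by rw [← sum_mul, sum_sub_distrib, sum_sub_distrib, Equiv.sum_comp σ v]

variable [LinearOrder R] [IsStrictOrderedRing R] {u v w : Fin n → R}

theorem det_vandermonde_mul_det_vandermonde_le_sq (hv : Monotone v) (hw : Monotone w)
    (h : ∀ i, v i + w i = 2 * u i) :
    (vandermonde v).det * (vandermonde w).det ≤ (vandermonde u).det ^ 2 := by
  have hdiff_mul_nonneg {i j : Fin n} (hij : j ∈ Ioi i) : 0 ≤ (v j - v i) * (w j - w i) :=
    mul_nonneg (sub_nonneg.2 (hv (mem_Ioi.1 hij).le)) (sub_nonneg.2 (hw (mem_Ioi.1 hij).le))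
  have hdiff_mul_le (i j : Fin n) : (v j - v i) * (w j - w i) ≤ (u j - u i) ^ 2 := by
    have hsum : (v j - v i) + (w j - w i) = 2 * (u j - u i) := by linear_combination h j - h i
    have hamgm := four_mul_le_sq_add (v j - v i) (w j - w i)
    rw [hsum] at hamgm
    linarith
  simp only [det_vandermonde, ← prod_mul_distrib, ← prod_pow]
  exact prod_le_prod (fun i _ => prod_nonneg fun j => hdiff_mul_nonneg) fun i _ =>
    prod_le_prod (fun j => hdiff_mul_nonneg) fun j _ => hdiff_mul_le i j

end Vandermonde

lemma sq_factorial_le_factorial_mul_factorial {n m p : ℕ} (h : n + m = 2 * p) :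
    p ! ^ 2 ≤ n ! * m ! := by
  have hchoose : (2 * p).choose n ≤ (2 * p).choose p := Nat.choose_le_centralBinom n p
  have hn : (2 * p).choose n * n ! * m ! = (2 * p)! := by
    rw [← h, Nat.choose_symm_add, Nat.add_choose_mul_factorial_mul_factorial]
  have hp : (2 * p).choose p * p ! * p ! = (2 * p)! := by
    rw [two_mul, Nat.add_choose_mul_factorial_mul_factorial]
  refine Nat.le_of_mul_le_mul_left ?_ (Nat.centralBinom_pos p)
  calc (2 * p).choose p * p ! ^ 2
      = (2 * p).choose n * (n ! * m !) := by rw [← mul_assoc, hn, ← hp]; ring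
    _ ≤ (2 * p).choose p * (n ! * m !) := Nat.mul_le_mul_right _ hchoose

section Branching

variable {a : ℕ → ℕ} {i d : ℕ} {c c' : ℕ × ℕ} {T : ℕ × ℕ → ℕ}

/-- Row `i` of the shape `a` ends in a corner, that is, a cell with no cell below it. -/
def IsCornerRow (a : ℕ → ℕ) (i : ℕ) : Prop := a (i + 1) < a i

instance : DecidablePred (IsCornerRow a) := fun _ => Nat.decLt _ _

/-- The rows, among the first `k`, in which the shape `a` has a corner. -/
def cornerRows (a : ℕ → ℕ) (k : ℕ) : Finset (Fin k) := {r : Fin k | IsCornerRow a r}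

lemma mem_cornerRows {k : ℕ} {r : Fin k} : r ∈ cornerRows a k ↔ IsCornerRow a r := by
  simp [cornerRows]

/-- The shape `a` with the last cell of row `i` removed (unchanged if row `i` is empty). -/
def removeCell (a : ℕ → ℕ) (i : ℕ) : ℕ → ℕ := update a i (a i - 1)

/-- The last cell of row `i`; a cell of the shape `a` only if row `i` is nonempty. -/
def lastCell (a : ℕ → ℕ) (i : ℕ) : ℕ × ℕ := (i, a i - 1)

lemma IsCornerRow.pos (hi : IsCornerRow a i) : 0 < a i := Nat.zero_lt_of_lt hi

lemma cellOf_lastCell (hi : 0 < a i) : cellOf a (lastCell a i) := Nat.sub_lt hi one_pos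

lemma not_cellOf_removeCell_lastCell : ¬ cellOf (removeCell a i) (lastCell a i) := by
  simp [cellOf, removeCell, lastCell]

lemma cellOf_removeCell : cellOf (removeCell a i) c ↔ cellOf a c ∧ c ≠ lastCell a i := by
  obtain ⟨r, s⟩ := c
  obtain rfl | hr := eq_or_ne r i
  · simp only [cellOf, removeCell, lastCell, update_self, ne_eq, Prod.mk.injEq, true_and]
    omega
  · simp [cellOf, removeCell, lastCell, hr]

lemma IsSYT.apply_le (hT : IsSYT a d T) (c : ℕ × ℕ) : T c ≤ d := by
  by_cases hc : cellOf a c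
  · exact (hT.2.2.2.1 c hc).2
  · exact (hT.1 c hc).trans_le (Nat.zero_le d)

lemma IsSYT.eq_of_apply_eq (hT : IsSYT a d T) (hc : cellOf a c) (hc' : cellOf a c')
    (h : T c = T c') : c = c' := by
  obtain ⟨hpos, hle⟩ := hT.2.2.2.1 c hc
  exact (hT.2.2.2.2 (T c) hpos hle).unique ⟨hc, rfl⟩ ⟨hc', h.symm⟩

/-- The standard Young tableaux counted by `fSYT`. -/
abbrev SYT (a : ℕ → ℕ) (d : ℕ) : Type := {T : ℕ × ℕ → ℕ // IsSYT a d T}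

instance : Finite (SYT a d) := by
  rcases isEmpty_or_nonempty (SYT a d) with _ | ⟨T₀, hT₀⟩
  · infer_instance
  have : Finite {c // cellOf a c} :=
    Finite.of_injective (fun c => (⟨T₀ c, Nat.lt_succ_of_le (hT₀.apply_le c)⟩ : Fin (d + 1)))
      fun c c' h => Subtype.ext (hT₀.eq_of_apply_eq c.2 c'.2 (Fin.mk.inj h))
  refine Finite.of_injective (fun (T : SYT a d) (c : {c // cellOf a c}) =>
    (⟨T.1 c, Nat.lt_succ_of_le (T.2.apply_le c)⟩ : Fin (d + 1))) fun T T' h => ?_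
  refine Subtype.ext (funext fun c => ?_)
  by_cases hc : cellOf a c
  · exact Fin.mk.inj (congrFun h ⟨c, hc⟩)
  · rw [T.2.1 c hc, T'.2.1 c hc]

lemma IsSYT.update_lastCell_lt_update_lastCell (hT : IsSYT (removeCell a i) d T)
    (hc : c ≠ lastCell a i) (hc' : cellOf a c')
    (h : cellOf (removeCell a i) c' → T c < T c') :
    update T (lastCell a i) (d + 1) c < update T (lastCell a i) (d + 1) c' := by
  rw [update_of_ne hc]
  obtain rfl | hne := eq_or_ne c' (lastCell a i)
  · rw [update_self]
    exact Nat.lt_succ_of_le (hT.apply_le c)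
  · rw [update_of_ne hne]
    exact h (cellOf_removeCell.2 ⟨hc', hne⟩)

lemma IsSYT.insertMax (hi : IsCornerRow a i) (hT : IsSYT (removeCell a i) d T) :
    IsSYT a (d + 1) (update T (lastCell a i) (d + 1)) := by
  have hle := hT.apply_le
  have hlt {c c' : ℕ × ℕ} := hT.update_lastCell_lt_update_lastCell (c := c) (c' := c')
  obtain ⟨hzero, hrow, hcol, hrange, hbij⟩ := hT
  refine ⟨fun c hc => ?_, fun r s hc => hlt ?_ hc (hrow r s), fun r s hc => hlt ?_ hc (hcol r s),
    fun c hc => ?_, fun m hm hmd => ?_⟩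
  · have hne : c ≠ lastCell a i := by
      rintro rfl
      exact hc (cellOf_lastCell hi.pos)
    rw [update_of_ne hne]
    exact hzero c fun h => hc (cellOf_removeCell.1 h).1
  · rintro ⟨⟩
    simp only [cellOf] at hc
    omega
  · rintro ⟨⟩
    simp only [cellOf, IsCornerRow] at hc hi
    omega
  · obtain rfl | hne := eq_or_ne c (lastCell a i)
    · simp
    · rw [update_of_ne hne]
      exact (hrange c (cellOf_removeCell.2 ⟨hc, hne⟩)).imp_right Nat.le_succ_of_le
  · obtain rfl | hmd := Nat.eq_or_lt_of_le hmd
    · refine ⟨lastCell a i, ⟨cellOf_lastCell hi.pos, update_self ..⟩, fun c ⟨_, hc⟩ => ?_⟩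
      by_contra hne
      rw [update_of_ne hne] at hc
      exact (hc ▸ hle c).not_gt (Nat.lt_succ_self d)
    · obtain ⟨c, ⟨hc, hTc⟩, hunique⟩ := hbij m hm (Nat.le_of_lt_succ hmd)
      obtain ⟨hca, hne⟩ := cellOf_removeCell.1 hc
      refine ⟨c, ⟨hca, by rwa [update_of_ne hne]⟩, fun c' ⟨hc', hTc'⟩ => ?_⟩
      have hne' : c' ≠ lastCell a i := by
        rintro rfl
        exact hmd.ne' (by rwa [update_self] at hTc')
      rw [update_of_ne hne'] at hTc'
      exact hunique c' ⟨cellOf_removeCell.2 ⟨hc', hne'⟩, hTc'⟩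

lemma IsSYT.eraseMax (hi : 0 < a i) (hT : IsSYT a (d + 1) T)
    (hmax : T (lastCell a i) = d + 1) :
    IsSYT (removeCell a i) d (update T (lastCell a i) 0) := by
  have heq {c : ℕ × ℕ} (hc : cellOf a c) (h : T c = d + 1) : c = lastCell a i :=
    hT.eq_of_apply_eq hc (cellOf_lastCell hi) (h.trans hmax.symm)
  have hle := hT.apply_le
  obtain ⟨hzero, hrow, hcol, hrange, hbij⟩ := hT
  have hlt {c c' : ℕ × ℕ} (hc' : cellOf (removeCell a i) c') (h : T c < T c') :
      update T (lastCell a i) 0 c < update T (lastCell a i) 0 c' := by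
    have hne : c ≠ lastCell a i := by
      rintro rfl
      exact (hmax ▸ h).not_ge (hle c')
    rwa [update_of_ne hne, update_of_ne (cellOf_removeCell.1 hc').2]
  refine ⟨fun c hc => ?_, fun r s hc => hlt hc (hrow r s (cellOf_removeCell.1 hc).1),
    fun r s hc => hlt hc (hcol r s (cellOf_removeCell.1 hc).1), fun c hc => ?_,
    fun m hm hmd => ?_⟩
  · obtain rfl | hne := eq_or_ne c (lastCell a i)
    · exact update_self ..
    · rw [update_of_ne hne]
      exact hzero c fun hca => hc (cellOf_removeCell.2 ⟨hca, hne⟩)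
  · obtain ⟨hca, hne⟩ := cellOf_removeCell.1 hc
    rw [update_of_ne hne]
    have hTc : T c ≠ d + 1 := fun h => hne (heq hca h)
    have := hrange c hca
    omega
  · obtain ⟨c, ⟨hc, hTc⟩, hunique⟩ := hbij m hm (Nat.le_succ_of_le hmd)
    have hne : c ≠ lastCell a i := by
      rintro rfl
      omega
    refine ⟨c, ⟨cellOf_removeCell.2 ⟨hc, hne⟩, by rwa [update_of_ne hne]⟩, fun c' ⟨hc', hTc'⟩ => ?_⟩
    obtain ⟨hca', hne'⟩ := cellOf_removeCell.1 hc'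
    exact hunique c' ⟨hca', by rwa [update_of_ne hne'] at hTc'⟩

lemma IsSYT.exists_isCornerRow_apply_lastCell_eq (hT : IsSYT a (d + 1) T) :
    ∃ i, IsCornerRow a i ∧ T (lastCell a i) = d + 1 := by
  have hle := hT.apply_le
  obtain ⟨-, hrow, hcol, -, hbij⟩ := hT
  obtain ⟨⟨i, j⟩, ⟨hc, hmax⟩, -⟩ := hbij (d + 1) (Nat.succ_pos d) le_rfl
  have hright : ¬ cellOf a (i, j + 1) := fun h => (hmax ▸ hrow i j h).not_ge (hle _)
  have hbelow : ¬ cellOf a (i + 1, j) := fun h => (hmax ▸ hcol i j h).not_ge (hle _)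
  simp only [cellOf] at hc hright hbelow
  obtain rfl : j = a i - 1 := by omega
  exact ⟨i, by simp only [IsCornerRow]; omega, hmax⟩

/-- The inverse of deleting the largest entry of a standard Young tableau. -/
def insertMax (a : ℕ → ℕ) (k d : ℕ)
    (p : Σ i : {i : Fin k // IsCornerRow a i}, SYT (removeCell a i) d) : SYT a (d + 1) :=
  ⟨update p.2.1 (lastCell a p.1.1) (d + 1), p.2.2.insertMax p.1.2⟩

lemma insertMax_injective (a : ℕ → ℕ) (k d : ℕ) : Injective (insertMax a k d) := by
  rintro ⟨⟨i, hi⟩, T, hT⟩ ⟨⟨i', hi'⟩, T', hT'⟩ h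
  have hval : update T (lastCell a i) (d + 1) = update T' (lastCell a i') (d + 1) :=
    congrArg Subtype.val h
  have hcell : lastCell a i = lastCell a i' :=
    (hT.insertMax hi).eq_of_apply_eq (cellOf_lastCell hi.pos) (cellOf_lastCell hi'.pos)
      (by rw [update_self, hval, update_self])
  obtain rfl : i = i' := Fin.ext (congrArg Prod.fst hcell)
  have hTT' : T = T' := by
    funext c
    obtain rfl | hne := eq_or_ne c (lastCell a i)
    · rw [hT.1 _ not_cellOf_removeCell_lastCell, hT'.1 _ not_cellOf_removeCell_lastCell]
    · simpa only [update_of_ne hne] using congrFun hval c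
  subst hTT'
  rfl

lemma insertMax_surjective {k : ℕ} (hk : ∀ i, k ≤ i → a i = 0) (d : ℕ) :
    Surjective (insertMax a k d) := by
  rintro ⟨T, hT⟩
  obtain ⟨i, hi, hmax⟩ := hT.exists_isCornerRow_apply_lastCell_eq
  have hik : i < k := not_le.1 fun h => hi.pos.ne' (hk i h)
  refine ⟨⟨⟨⟨i, hik⟩, hi⟩, _, hT.eraseMax hi.pos hmax⟩, Subtype.ext ?_⟩
  simp only [insertMax, update_idem, ← hmax, update_eq_self]

theorem fSYT_succ {k : ℕ} (hk : ∀ i, k ≤ i → a i = 0) (d : ℕ) :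
    fSYT a (d + 1) = ∑ i ∈ cornerRows a k, fSYT (removeCell a i) d := by
  rw [fSYT, ← Nat.card_congr (Equiv.ofBijective _ ⟨insertMax_injective a k d,
    insertMax_surjective hk d⟩), Nat.card_sigma]
  exact (sum_subtype _ (fun _ => mem_cornerRows) fun i : Fin k => fSYT (removeCell a i) d).symm

lemma isSYT_zero_iff : IsSYT 0 0 T ↔ T = 0 := by
  refine ⟨fun hT => funext fun c => hT.1 c (Nat.not_lt_zero _), ?_⟩
  rintro rfl
  exact ⟨fun _ _ => rfl, fun _ _ h => absurd h (Nat.not_lt_zero _),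
    fun _ _ h => absurd h (Nat.not_lt_zero _), fun _ h => absurd h (Nat.not_lt_zero _),
    fun _ hm hm' => absurd hm (by omega)⟩

lemma fSYT_zero_zero : fSYT 0 0 = 1 := by
  simp [fSYT, isSYT_zero_iff]

end Branching

/-- `a` is a partition of `d` with at most `k` parts. -/
structure IsPartition (a : ℕ → ℕ) (k d : ℕ) : Prop where
  antitone : Antitone a
  eq_zero_of_le : ∀ i, k ≤ i → a i = 0
  sum_eq : ∑ i ∈ range k, a i = d

namespace IsPartition

variable {a b c : ℕ → ℕ} {k d : ℕ}

lemma eq_zero (ha : IsPartition a k 0) : a = 0 := by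
  funext i
  obtain hi | hi := le_or_gt k i
  · exact ha.eq_zero_of_le i hi
  · exact sum_eq_zero_iff.1 ha.sum_eq i (mem_range.2 hi)

protected lemma removeCell (ha : IsPartition a k (d + 1)) {i : ℕ} (hik : i < k)
    (hi : IsCornerRow a i) :
    IsPartition (removeCell a i) k d where
  antitone := by
    refine antitone_nat_of_succ_le fun n => ?_
    have hn : a (n + 1) ≤ a n := ha.antitone n.le_succ
    simp only [IsCornerRow] at hi
    simp only [removeCell, update_apply]
    split_ifs <;> subst_vars <;> omega
  eq_zero_of_le j hj := by
    rw [removeCell, update_of_ne (by omega), ha.eq_zero_of_le j hj]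
  sum_eq := by
    have hsum := ha.sum_eq
    rw [sum_eq_add_sum_sdiff_singleton_of_mem (mem_range.2 hik)] at hsum
    rw [removeCell, sum_update_of_mem (mem_range.2 hik)]
    have := hi.pos
    omega

lemma midpoint (ha : IsPartition a k d) (hb : IsPartition b k d)
    (h : ∀ i, a i + b i = 2 * c i) : IsPartition c k d where
  antitone i j hij := by
    have := ha.antitone hij
    have := hb.antitone hij
    have := h i
    have := h j
    omega
  eq_zero_of_le i hi := by
    have := h i
    rw [ha.eq_zero_of_le i hi, hb.eq_zero_of_le i hi] at this
    omega
  sum_eq := by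
    have hsum : ∑ i ∈ range k, (a i + b i) = ∑ i ∈ range k, 2 * c i :=
      sum_congr rfl fun i _ => h i
    rw [sum_add_distrib, ha.sum_eq, hb.sum_eq, ← mul_sum] at hsum
    omega

end IsPartition

section Frobenius

variable {a b c : ℕ → ℕ} {k d : ℕ}

/-- The beta-numbers (first-column hook lengths) of a partition with at most `k` parts, listed
from the bottom row up so that they increase. -/
def betaNumber (a : ℕ → ℕ) (k : ℕ) (i : Fin k) : ℕ := a i.rev + i

/-- The quotient `∏_{i<j} (β_j - β_i) / ∏_i β_i!` of Frobenius' formula for the number of standard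
Young tableaux. -/
noncomputable def frobeniusQuotient (a : ℕ → ℕ) (k : ℕ) : ℚ :=
  (vandermonde fun i => (betaNumber a k i : ℚ)).det / ∏ i, ((betaNumber a k i)! : ℚ)

lemma strictMono_betaNumber (ha : Antitone a) (k : ℕ) : StrictMono (betaNumber a k) :=
  fun _ _ hij => add_lt_add_of_le_of_lt (ha (Fin.rev_le_rev.2 hij.le)) hij

lemma betaNumber_removeCell {r : Fin k} (hr : 0 < a r) :
    betaNumber (removeCell a r) k =
      update (betaNumber a k) r.rev (betaNumber a k r.rev - 1) := by
  funext i
  obtain rfl | hi := eq_or_ne i r.rev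
  · simp only [betaNumber, removeCell, Fin.rev_rev, update_self]
    omega
  · have hir : (i.rev : ℕ) ≠ r := fun h => hi (by rw [← Fin.ext h, Fin.rev_rev])
    simp only [betaNumber, removeCell, update_of_ne hi, update_of_ne hir]

lemma frobeniusQuotient_zero (k : ℕ) : frobeniusQuotient 0 k = 1 := by
  have hbeta : betaNumber 0 k = fun i : Fin k => (i : ℕ) := by simp [funext_iff, betaNumber]
  rw [frobeniusQuotient, hbeta]
  cases k with
  | zero => simp
  | succ n =>
    rw [det_vandermonde_id_eq_superFactorial, ← Nat.prod_range_succ_factorial, Nat.cast_prod,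
      Fin.prod_univ_eq_prod_range fun i => (i ! : ℚ)]
    exact div_self (by positivity)

lemma frobeniusQuotient_removeCell {r : Fin k} (hr : 0 < a r) :
    frobeniusQuotient (removeCell a r) k =
      betaNumber a k r.rev * (vandermonde (update (fun i => (betaNumber a k i : ℚ)) r.rev
        (betaNumber a k r.rev - 1))).det / ∏ i, ((betaNumber a k i)! : ℚ) := by
  have hpos : 0 < betaNumber a k r.rev := by
    rw [betaNumber, Fin.rev_rev]
    omega
  have hvec : (fun i => (betaNumber (removeCell a r) k i : ℚ)) =
      update (fun i => (betaNumber a k i : ℚ)) r.rev (betaNumber a k r.rev - 1) := by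
    funext i
    rw [betaNumber_removeCell hr, apply_update (fun _ (m : ℕ) => (m : ℚ)), Nat.cast_pred hpos]
  have hfact : ∏ i, ((betaNumber a k i)! : ℚ) =
      betaNumber a k r.rev * ∏ i, ((betaNumber (removeCell a r) k i)! : ℚ) := by
    simp only [betaNumber_removeCell hr, apply_update (fun _ (m : ℕ) => (m ! : ℚ))]
    rw [prod_update_of_mem (mem_univ _), ← mul_assoc, ← Nat.cast_mul,
      Nat.mul_factorial_pred hpos.ne',
      ← prod_eq_mul_prod_sdiff_singleton_of_mem (mem_univ _) fun i => ((betaNumber a k i)! : ℚ)]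
  rw [hfact, mul_div_mul_left _ _ (Nat.cast_ne_zero.2 hpos.ne'), ← hvec, frobeniusQuotient]

lemma betaNumber_mul_det_vandermonde_eq_zero (ha : IsPartition a k d) {r : Fin k}
    (hr : ¬ IsCornerRow a r) :
    betaNumber a k r.rev * (vandermonde (update (fun i => (betaNumber a k i : ℚ)) r.rev
      (betaNumber a k r.rev - 1))).det = 0 := by
  have hrow : a (r + 1) = a r := le_antisymm (ha.antitone (Nat.le_succ _)) (not_lt.1 hr)
  obtain hlast | hlt := (Nat.succ_le_of_lt r.2).eq_or_lt
  · have hbeta : betaNumber a k r.rev = 0 := by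
      simp only [betaNumber, Fin.rev_rev, Fin.val_rev]
      have := ha.eq_zero_of_le (r + 1) hlast.ge
      omega
    rw [hbeta, Nat.cast_zero, zero_mul]
  · let s : Fin k := ⟨r + 1, hlt⟩
    have hbeta : betaNumber a k r.rev = betaNumber a k s.rev + 1 := by
      simp only [betaNumber, Fin.rev_rev, Fin.val_rev, s, hrow]
      omega
    have hne : s.rev ≠ r.rev := fun h => by simpa [s, Fin.ext_iff] using Fin.rev_injective h
    refine mul_eq_zero_of_right _ (det_vandermonde_eq_zero_iff.2 ⟨r.rev, s.rev, ?_, hne.symm⟩)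
    rw [update_self, update_of_ne hne, hbeta, Nat.cast_succ, add_sub_cancel_right]

lemma sum_betaNumber_sub (ha : IsPartition a k d) :
    ∑ i : Fin k, ((betaNumber a k i : ℚ) - (i : ℕ)) = d := by
  simp only [betaNumber, Nat.cast_add, add_sub_cancel_right]
  calc ∑ i : Fin k, (a i.rev : ℚ)
      = ∑ i : Fin k, (a i : ℚ) := Equiv.sum_comp Fin.revPerm fun i : Fin k => (a i : ℚ)
    _ = d := by
      rw [Fin.sum_univ_eq_sum_range (fun i => (a i : ℚ)), ← Nat.cast_sum, ha.sum_eq]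

theorem sum_frobeniusQuotient_removeCell (ha : IsPartition a k d) :
    ∑ r ∈ cornerRows a k, frobeniusQuotient (removeCell a r) k =
      d * frobeniusQuotient a k := by
  set β : Fin k → ℚ := fun i => betaNumber a k i
  calc ∑ r ∈ cornerRows a k, frobeniusQuotient (removeCell a r) k
      = ∑ r ∈ cornerRows a k,
          β r.rev * (vandermonde (update β r.rev (β r.rev - 1))).det /
            ∏ i, ((betaNumber a k i)! : ℚ) :=
        sum_congr rfl fun r hr => frobeniusQuotient_removeCell (mem_cornerRows.1 hr).pos
    _ = ∑ r : Fin k, β r.rev * (vandermonde (update β r.rev (β r.rev - 1))).det /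
            ∏ i, ((betaNumber a k i)! : ℚ) := by
        refine sum_subset (subset_univ _) fun r _ hr => ?_
        rw [betaNumber_mul_det_vandermonde_eq_zero ha (mt mem_cornerRows.2 hr), zero_div]
    _ = (∑ i, β i * (vandermonde (update β i (β i - 1))).det) /
          ∏ i, ((betaNumber a k i)! : ℚ) := by
        rw [sum_div]
        exact Equiv.sum_comp Fin.revPerm fun i =>
          β i * (vandermonde (update β i (β i - 1))).det / ∏ i, ((betaNumber a k i)! : ℚ)
    _ = d * frobeniusQuotient a k := by
        rw [sum_mul_det_vandermonde_update_sub_one, sum_betaNumber_sub ha, mul_div_assoc,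
          frobeniusQuotient]

theorem fSYT_eq_factorial_mul_frobeniusQuotient (ha : IsPartition a k d) :
    (fSYT a d : ℚ) = d ! * frobeniusQuotient a k := by
  induction d generalizing a with
  | zero => simp [ha.eq_zero, fSYT_zero_zero, frobeniusQuotient_zero]
  | succ d ih =>
    calc (fSYT a (d + 1) : ℚ)
        = ∑ r ∈ cornerRows a k, (fSYT (removeCell a r) d : ℚ) := by
          rw [fSYT_succ ha.eq_zero_of_le, Nat.cast_sum]
      _ = ∑ r ∈ cornerRows a k, d ! * frobeniusQuotient (removeCell a r) k :=
          sum_congr rfl fun r hr => ih (ha.removeCell r.2 (mem_cornerRows.1 hr))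
      _ = (d + 1)! * frobeniusQuotient a k := by
          rw [← mul_sum, sum_frobeniusQuotient_removeCell ha, Nat.factorial_succ]
          push_cast
          ring

lemma frobeniusQuotient_mul_frobeniusQuotient_le_sq (ha : Antitone a) (hb : Antitone b)
    (h : ∀ i, a i + b i = 2 * c i) (k : ℕ) :
    frobeniusQuotient a k * frobeniusQuotient b k ≤ frobeniusQuotient c k ^ 2 := by
  have hbeta (i : Fin k) : betaNumber a k i + betaNumber b k i = 2 * betaNumber c k i := by
    simp only [betaNumber]
    have := h i.rev
    omega
  have hmono {a : ℕ → ℕ} (ha : Antitone a) : Monotone fun i => (betaNumber a k i : ℚ) :=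
    Nat.mono_cast.comp (strictMono_betaNumber ha k).monotone
  rw [frobeniusQuotient, frobeniusQuotient, frobeniusQuotient, div_mul_div_comm, div_pow]
  refine div_le_div₀ (sq_nonneg _) ?_ (by positivity) ?_
  · exact det_vandermonde_mul_det_vandermonde_le_sq (hmono ha) (hmono hb)
      fun i => mod_cast hbeta i
  · rw [← prod_mul_distrib, ← prod_pow]
    exact prod_le_prod (fun i _ => by positivity)
      fun i _ => mod_cast sq_factorial_le_factorial_mul_factorial (hbeta i)

theorem fSYT_mul_fSYT_le_sq_of_add_eq_two_mul (ha : IsPartition a k d) (hb : IsPartition b k d)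
    (h : ∀ i, a i + b i = 2 * c i) : fSYT a d * fSYT b d ≤ fSYT c d ^ 2 := by
  suffices (fSYT a d : ℚ) * fSYT b d ≤ (fSYT c d : ℚ) ^ 2 from mod_cast this
  rw [fSYT_eq_factorial_mul_frobeniusQuotient ha, fSYT_eq_factorial_mul_frobeniusQuotient hb,
    fSYT_eq_factorial_mul_frobeniusQuotient (ha.midpoint hb h), mul_mul_mul_comm, mul_pow, ← sq]
  gcongr
  exact frobeniusQuotient_mul_frobeniusQuotient_le_sq ha.antitone hb.antitone h k

end Frobenius

section Padding

variable {l m : ℕ →₀ ℕ} {k d : ℕ}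

lemma psize_eq_sum_range (hl : l.support ⊆ range k) : psize l = ∑ i ∈ range k, l i :=
  Finsupp.sum_of_support_subset l hl _ fun _ _ => rfl

lemma even_psize_add_psize (h : ∀ i, Even (l i + m i)) : Even (psize l + psize m) := by
  have hadd : psize (l + m) = psize l + psize m :=
    Finsupp.sum_add_index' (fun _ => rfl) fun _ _ _ => rfl
  rw [← hadd]
  exact even_sum _ fun i _ => h i

lemma IsPtn.isPartition_padF (hl : IsPtn l) (hk : l.support ⊆ range k)
    (hd : psize l + l 0 ≤ d) : IsPartition (padF l (psize l) d) (k + 1) d where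
  antitone := antitone_nat_of_succ_le fun n => by
    cases n with
    | zero => exact Nat.le_sub_of_add_le' hd
    | succ n => exact hl n (n + 1) n.le_succ
  eq_zero_of_le := by
    rintro (_ | i) hi
    · omega
    · exact Finsupp.notMem_support_iff.1 fun h => (mem_range.1 (hk h)).not_ge (by omega)
  sum_eq := by
    rw [sum_range_succ']
    change ∑ i ∈ range k, l i + (d - psize l) = d
    rw [← psize_eq_sum_range hk]
    omega

lemma padF_add_padF {a b : ℕ → ℕ} {s t : ℕ} (hs : s ≤ d) (ht : t ≤ d) (hst : Even (s + t))
    (hab : ∀ i, Even (a i + b i)) (i : ℕ) :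
    padF a s d i + padF b t d i = 2 * padF (fun i => (a i + b i) / 2) ((s + t) / 2) d i := by
  cases i with
  | zero =>
    change d - s + (d - t) = 2 * (d - (s + t) / 2)
    have := Nat.two_mul_div_two_of_even hst
    omega
  | succ i => exact (Nat.two_mul_div_two_of_even (hab i)).symm

end Padding

/-- Proposition `thmd`, inequality (younglog): for partitions `λ, μ` with `(λ+μ)/2`
a partition, `(f^{((λ+μ)/2)[d]})² ≥ f^{λ[d]} · f^{μ[d]}` for all
`d ≥ max(|λ|+λ₁, |μ|+μ₁)`. -/
theorem fSYT_padded_log_concave (l m : ℕ →₀ ℕ) (hl : IsPtn l) (hm : IsPtn m)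
    (hev : ∀ i, Even (l i + m i)) (d : ℕ)
    (hd : max (psize l + l 0) (psize m + m 0) ≤ d) :
    fSYT (padF l (psize l) d) d * fSYT (padF m (psize m) d) d ≤
      fSYT (padF (fun i => (l i + m i) / 2) ((psize l + psize m) / 2) d) d ^ 2 := by
  obtain ⟨k, hk⟩ := (l.support ∪ m.support).exists_nat_subset_range
  have hdl : psize l + l 0 ≤ d := (le_max_left _ _).trans hd
  have hdm : psize m + m 0 ≤ d := (le_max_right _ _).trans hd
  exact fSYT_mul_fSYT_le_sq_of_add_eq_two_mul
    (hl.isPartition_padF (subset_union_left.trans hk) hdl)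
    (hm.isPartition_padF (subset_union_right.trans hk) hdm)
    (padF_add_padF (le_of_add_le_left hdl) (le_of_add_le_left hdm)
      (even_psize_add_psize hev) hev)
end

section
/- The Kronecker coefficient g_{(N,N),(N,N)}^{(N,N)} (the multiplicity of the irreducible S_{2N}-representation indexed by (N,N) in the tensor square of itself) equals 0 when N is odd and equals 1 when N is even. -/
open MvPolynomial

/-- Power sum polynomial `p_r` in `d` variables. -/
noncomputable def powSum (d r : ℕ) : MvPolynomial (Fin d) ℤ := ∑ i, X i ^ r

/-- The power sum polynomial associated to a permutation: the product of `p_c` over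
cycle lengths `c` of the permutation, including fixed points. -/
noncomputable def permPowSum (d : ℕ) (σ : Equiv.Perm (Fin d)) : MvPolynomial (Fin d) ℤ :=
  (σ.cycleType.map (powSum d)).prod * (powSum d 1) ^ (d - σ.cycleType.sum)

/-- The Vandermonde product `a_δ = ∏_{i<j} (x_i - x_j)`. -/
noncomputable def vandermonde (d : ℕ) : MvPolynomial (Fin d) ℤ :=
  ∏ p ∈ Finset.univ.filter (fun p : Fin d × Fin d => p.1 < p.2), (X p.1 - X p.2)

/-- The exponent `λ + δ` where `δ = (d-1, d-2, …, 0)`; `lam` is `0`-indexed. -/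
noncomputable def staircase (d : ℕ) (lam : ℕ → ℕ) : Fin d →₀ ℕ :=
  Finsupp.equivFunOnFinite.symm (fun i => lam i.val + (d - 1 - i.val))

/-- Frobenius character formula: the irreducible character `χ^λ` of the symmetric
group `S_d` evaluated at `σ` is the coefficient of `x^{λ+δ}` in `a_δ · p_{cycletype σ}`. -/
noncomputable def chi (d : ℕ) (lam : ℕ → ℕ) (σ : Equiv.Perm (Fin d)) : ℤ :=
  coeff (staircase d lam) (vandermonde d * permPowSum d σ)

/-- The Kronecker coefficient `g_{λμ}^ν = ⟨χ^λ χ^μ, χ^ν⟩` for `S_d`. -/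
noncomputable def gKron (d : ℕ) (lam mu nu : ℕ → ℕ) : ℤ :=
  (∑ σ : Equiv.Perm (Fin d), chi d lam σ * chi d mu σ * chi d nu σ) / (d.factorial : ℤ)

/-- The padded partition `λ[d] = (d - |λ|, λ₁, λ₂, …)`. -/
def pad (f : ℕ →₀ ℕ) (d : ℕ) : ℕ → ℕ := fun i => if i = 0 then d - psize f else f (i - 1)

/-- The two-row partition `(N, N)`. -/
def twoRow (N : ℕ) : ℕ → ℕ := fun i => if i < 2 then N else 0

/-!
By the Jacobi–Trudi formula `χ^{(N,N)}` is the difference of the permutation characters of `S_{2N}`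
on the words with letter multiplicities `(N, N)` and `(N + 1, N - 1)`. By Mackey's formula and
Burnside's lemma, summing a product of three such characters over `S_{2N}` counts `(2N)!` times the
three-dimensional tables of natural numbers with prescribed margins. Once two of the margins are
fixed by a `2 × 2` table, the difference in the third direction is the multiplicity of the trivial
representation in a tensor product of four irreducible representations of `SL₂`, which is a minimum
by the Clebsch–Gordan rule. Summing these minima turns the Kronecker coefficient into the second
difference of `⌊n ^ 2 / 4⌋` at `N`, and this is `0` for odd `N` and `1` for even `N`.
-/

open Finset

section CycleClasses

open Equiv.Perm

variable {α : Type*}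

/-- The cycles of `σ`, fixed points included, as classes of points of `α`. Unlike
`Equiv.Perm.cycleFactorsFinset`, this indexes all the factors of `permPowSum`. -/
abbrev CycleClass (σ : Equiv.Perm α) : Type _ := Quotient (SameCycle.setoid σ)

theorem CycleClass.mk_eq_mk {σ : Equiv.Perm α} {x y : α} :
    (⟦x⟧ : CycleClass σ) = ⟦y⟧ ↔ SameCycle σ x y :=
  Quotient.eq

theorem apply_eq_of_sameCycle {β : Type*} [Finite α] {σ : Equiv.Perm α} {f : α → β}
    (hf : f ∘ σ = f) {x y : α} (hxy : SameCycle σ x y) : f x = f y := by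
  obtain ⟨n, rfl⟩ := hxy.exists_nat_pow_eq
  rw [coe_pow, ← Function.comp_apply (f := f), Function.iterate_invariant hf]

variable [Fintype α] [DecidableEq α]

instance (σ : Equiv.Perm α) : DecidableRel (SameCycle.setoid σ).r :=
  inferInstanceAs (DecidableRel (SameCycle σ))

/-- The cycle factor of `σ` carried by a class; it is `1` for the class of a fixed point. -/
def CycleClass.cycle {σ : Equiv.Perm α} : CycleClass σ → Equiv.Perm α :=
  Quotient.lift (cycleOf σ) fun _ _ h => SameCycle.cycleOf_eq h

theorem CycleClass.card_of_mem_support {σ : Equiv.Perm α} {x : α} (hx : x ∈ σ.support) :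
    #{y | (⟦y⟧ : CycleClass σ) = ⟦x⟧} = #(cycleOf σ x).support := by
  congr 1
  ext y
  simp only [mem_filter_univ, CycleClass.mk_eq_mk, mem_support_cycleOf_iff, hx, and_true]
  exact sameCycle_comm

theorem CycleClass.card_of_apply_eq {σ : Equiv.Perm α} {x : α} (hx : σ x = x) :
    #{y | (⟦y⟧ : CycleClass σ) = ⟦x⟧} = 1 := by
  refine card_eq_one.2 ⟨x, ?_⟩
  ext y
  simp only [mem_filter_univ, mem_singleton, CycleClass.mk_eq_mk]
  exact ⟨fun h => h.eq_of_right hx, fun h => h ▸ SameCycle.refl σ y⟩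

theorem CycleClass.prod_card_of_cycle_ne_one {M : Type*} [CommMonoid M] (σ : Equiv.Perm α)
    (φ : ℕ → M) :
    ∏ q : CycleClass σ with q.cycle ≠ 1, φ #{x | ⟦x⟧ = q} =
      ∏ c ∈ σ.cycleFactorsFinset, φ #c.support := by
  have cycle_mk_ne_one {x : α} : CycleClass.cycle (⟦x⟧ : CycleClass σ) ≠ 1 ↔ x ∈ σ.support := by
    rw [mem_support, Ne, Ne, ← cycleOf_eq_one_iff]; rfl
  refine prod_nbij CycleClass.cycle ?_ ?_ ?_ ?_
  · refine fun q => Quotient.inductionOn q fun x hx => ?_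
    exact cycleOf_mem_cycleFactorsFinset_iff.2 (cycle_mk_ne_one.1 (mem_filter.1 hx).2)
  · refine fun q hq r hr => Quotient.inductionOn₂ q r (fun x y hx hy h => ?_) hq hr
    simp only [coe_filter_univ, Set.mem_ofPred_eq, cycle_mk_ne_one] at hx hy
    exact CycleClass.mk_eq_mk.2 ((sameCycle_iff_cycleOf_eq_of_mem_support hx hy).2 h)
  · intro c hc
    obtain ⟨x, hx⟩ := (mem_cycleFactorsFinset_iff.1 hc).1.nonempty_support
    refine ⟨⟦x⟧, ?_, (cycle_is_cycleOf hx hc).symm⟩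
    simpa only [coe_filter_univ, Set.mem_ofPred_eq, cycle_mk_ne_one] using
      mem_cycleFactorsFinset_support_le hc hx
  · refine fun q => Quotient.inductionOn q fun x hx => ?_
    rw [CycleClass.card_of_mem_support (cycle_mk_ne_one.1 (mem_filter.1 hx).2)]
    rfl

theorem CycleClass.prod_card_of_cycle_eq_one {M : Type*} [CommMonoid M] (σ : Equiv.Perm α)
    (φ : ℕ → M) :
    ∏ q : CycleClass σ with q.cycle = 1, φ #{x | ⟦x⟧ = q} = φ 1 ^ #σ.supportᶜ := by
  have cycle_mk_eq_one {x : α} : CycleClass.cycle (⟦x⟧ : CycleClass σ) = 1 ↔ σ x = x :=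
    cycleOf_eq_one_iff σ
  rw [← prod_const]
  symm
  refine prod_nbij (fun x => (⟦x⟧ : CycleClass σ)) ?_ ?_ ?_ ?_
  · intro x hx
    simpa [cycle_mk_eq_one] using hx
  · intro x hx y _ h
    exact (CycleClass.mk_eq_mk.1 h).eq_of_left (notMem_support.1 (mem_compl.1 (mem_coe.1 hx)))
  · refine fun q => Quotient.inductionOn q fun x hx => ⟨x, ?_, rfl⟩
    simpa [cycle_mk_eq_one] using hx
  · intro x hx
    rw [CycleClass.card_of_apply_eq (by simpa using hx)]

theorem CycleClass.prod_card {M : Type*} [CommMonoid M] (σ : Equiv.Perm α) (φ : ℕ → M) :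
    ∏ q : CycleClass σ, φ #{x | ⟦x⟧ = q} =
      (σ.cycleType.map φ).prod * φ 1 ^ (Fintype.card α - σ.cycleType.sum) := by
  rw [← prod_filter_not_mul_prod_filter univ (fun q : CycleClass σ => q.cycle = 1),
    CycleClass.prod_card_of_cycle_ne_one, CycleClass.prod_card_of_cycle_eq_one, card_compl,
    sum_cycleType, cycleType_def, Multiset.map_map]
  rfl

theorem sum_prod_of_comp_perm_eq {R K : Type*} [CommSemiring R] [Fintype K] [DecidableEq K]
    (σ : Equiv.Perm α) (v : K → R) :
    ∑ f : α → K with f ∘ σ = f, ∏ i, v (f i) = ∏ q : CycleClass σ, ∑ k, v k ^ #{x | ⟦x⟧ = q} := by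
  rw [prod_univ_sum, Fintype.piFinset_univ]
  refine sum_bij' (fun f hf => Quotient.lift f fun _ _ => apply_eq_of_sameCycle (by simpa using hf))
    (fun g _ x => g ⟦x⟧) (fun _ _ => mem_univ _) ?_ (fun _ _ => rfl) ?_ ?_
  · intro g _
    have hσ (x : α) : (⟦σ x⟧ : CycleClass σ) = ⟦x⟧ :=
      CycleClass.mk_eq_mk.2 (sameCycle_apply_left.2 (SameCycle.refl σ x))
    exact mem_filter_univ _ |>.2 (funext fun x => congrArg g (hσ x))
  · exact fun g _ => funext fun q => Quotient.inductionOn q fun _ => rfl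
  · intro f _
    rw [← prod_fiberwise univ (fun x => (⟦x⟧ : CycleClass σ))]
    refine prod_congr rfl fun q _ => prod_eq_pow_card fun x hx => ?_
    rw [← (mem_filter_univ _).1 hx]
    rfl

end CycleClasses

section YoungCharacters

variable {α C D : Type*} [Fintype α] [DecidableEq C] [DecidableEq D]

/-- The content of a word `f`: how often each letter occurs in it. -/
def content (f : α → C) (c : C) : ℕ := #{a | f a = c}

theorem content_comp_perm (f : α → C) (σ : Equiv.Perm α) : content (f ∘ σ) = content f :=
  funext fun _ => card_equiv σ (by simp)

theorem content_comp_apply_of_injective {e : C → D} (he : e.Injective) (f : α → C) (c : C) :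
    content (e ∘ f) (e c) = content f c := by
  simp [content, he.eq_iff]

theorem mem_range_of_content_ne_zero {f : α → C} {c : C} (h : content f c ≠ 0) :
    c ∈ Set.range f := by
  obtain ⟨a, ha⟩ := card_ne_zero.1 h
  exact ⟨a, (mem_filter.1 ha).2⟩

theorem content_apply_ne_zero (f : α → C) (a : α) : content f (f a) ≠ 0 :=
  card_ne_zero.2 ⟨a, by simp⟩

theorem content_fst_comp [Fintype D] (f : α → C × D) (c : C) :
    content (Prod.fst ∘ f) c = ∑ d, content f (c, d) := by
  rw [content, card_eq_sum_card_fiberwise (f := Prod.snd ∘ f) (t := univ) fun _ _ => by simp]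
  simp only [content, filter_filter, Function.comp_apply, Prod.ext_iff]

theorem content_snd_comp [Fintype C] (f : α → C × D) (d : D) :
    content (Prod.snd ∘ f) d = ∑ c, content f (c, d) := by
  rw [content, card_eq_sum_card_fiberwise (f := Prod.fst ∘ f) (t := univ) fun _ _ => by simp]
  simp only [content, filter_filter, Function.comp_apply, Prod.ext_iff, and_comm]

theorem exists_comp_perm_eq_of_content_eq {f g : α → C} (h : content f = content g) :
    ∃ τ : Equiv.Perm α, g ∘ τ = f := by
  have fiberEquiv (c : C) : Nonempty ({a // f a = c} ≃ {a // g a = c}) := by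
    rw [← Fintype.card_eq, Fintype.card_subtype, Fintype.card_subtype]
    exact congrFun h c
  exact ⟨Equiv.ofFiberEquiv fun c => (fiberEquiv c).some,
    funext fun a => Equiv.ofFiberEquiv_map _ a⟩

theorem exists_content_eq [Fintype C] {n : C → ℕ} (h : ∑ c, n c = Fintype.card α) :
    ∃ f : α → C, content f = n := by
  let e : α ≃ Σ c, Fin (n c) := Fintype.equivOfCardEq (by simp [h])
  refine ⟨fun a => (e a).1, funext fun c => ?_⟩
  calc content (fun a => (e a).1) c = #{x : Σ c, Fin (n c) | x.1 = c} := card_equiv e (by simp)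
    _ = #(univ.map (Function.Embedding.sigmaMk (β := fun c => Fin (n c)) c)) := by
      congr 1
      ext ⟨c', i⟩
      refine ⟨fun h => ?_, fun h => ?_⟩
      · obtain rfl : c' = c := (mem_filter.1 h).2
        exact mem_map_of_mem _ (mem_univ i)
      · obtain ⟨_, _, hi⟩ := mem_map.1 h
        exact mem_filter.2 ⟨mem_univ _, (congrArg Sigma.fst hi).symm⟩
    _ = n c := by rw [card_map, card_fin]

/-- The value at `σ` of the permutation character of `Equiv.Perm α` on the words of content `n`,
that is, of the trivial character induced from the Young subgroup of type `n`. -/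
def youngChar [DecidableEq α] [Fintype C] (n : C → ℕ) (σ : Equiv.Perm α) : ℕ :=
  #{f : α → C | content f = n ∧ f ∘ σ = f}

theorem youngChar_comp_embedding [DecidableEq α] [Fintype C] [Fintype D] (e : C ↪ D) {n : D → ℕ}
    (hn : ∀ d ∉ Set.range e, n d = 0) (σ : Equiv.Perm α) :
    youngChar (n ∘ e) σ = youngChar n σ := by
  refine card_nbij (e ∘ ·) ?_ (fun _ _ _ _ h => e.injective.comp_left h) ?_
  · intro f hf
    obtain ⟨hfn, hfσ⟩ := (mem_filter_univ _).1 hf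
    refine (mem_filter_univ _).2 ⟨funext fun d => ?_, by rw [Function.comp_assoc, hfσ]⟩
    by_cases hd : d ∈ Set.range e
    · obtain ⟨c, rfl⟩ := hd
      rw [content_comp_apply_of_injective e.injective, hfn, Function.comp_apply]
    · rw [hn d hd]
      contrapose! hd
      exact Set.range_comp_subset_range f e (mem_range_of_content_ne_zero hd)
  · intro g hg
    obtain ⟨hgn, hgσ⟩ := (mem_filter_univ _).1 hg
    have hrange (a : α) : g a ∈ Set.range e := by
      by_contra ha
      exact content_apply_ne_zero g a (hgn ▸ hn _ ha)
    choose f hf using hrange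
    obtain rfl : e ∘ f = g := funext hf
    refine ⟨f, (mem_filter_univ _).2 ⟨funext fun c => ?_, e.injective.comp_left hgσ⟩, rfl⟩
    rw [← content_comp_apply_of_injective e.injective, hgn, Function.comp_apply]

/-- Burnside's lemma for the transitive action on the words of content `n`. -/
theorem sum_youngChar [DecidableEq α] [Fintype C] {n : C → ℕ} (h : ∑ c, n c = Fintype.card α) :
    ∑ σ : Equiv.Perm α, youngChar n σ = (Fintype.card α).factorial := by
  obtain ⟨f₀, rfl⟩ := exists_content_eq h
  have card_stabilizer (f : α → C) :
      #{σ : Equiv.Perm α | content f = content f₀ ∧ f ∘ σ = f} =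
        #{σ : Equiv.Perm α | f = f₀ ∘ σ} := by
    by_cases hf : content f = content f₀
    · obtain ⟨τ, rfl⟩ := exists_comp_perm_eq_of_content_eq hf
      exact card_equiv (Equiv.mulLeft τ) (by simp [hf, Function.comp_assoc, eq_comm])
    · rw [filter_false_of_mem, filter_false_of_mem]
      · rintro σ - rfl
        exact hf (content_comp_perm f₀ σ)
      · exact fun σ _ h => hf h.1
  calc ∑ σ : Equiv.Perm α, youngChar (content f₀) σ
      = ∑ f : α → C, #{σ : Equiv.Perm α | content f = content f₀ ∧ f ∘ σ = f} :=
        sum_card_bipartiteAbove_eq_sum_card_bipartiteBelow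
          fun (σ : Equiv.Perm α) f => content f = content f₀ ∧ f ∘ σ = f
    _ = ∑ f : α → C, #{σ : Equiv.Perm α | f₀ ∘ σ = f} := by simp_rw [card_stabilizer, eq_comm]
    _ = #(univ : Finset (Equiv.Perm α)) :=
        (card_eq_sum_card_fiberwise fun _ _ => mem_coe.2 (mem_univ _)).symm
    _ = (Fintype.card α).factorial := by rw [card_univ, Fintype.card_perm]

/-- The matrices of natural numbers with row sums `n` and column sums `m`. -/
def contingencyTables [Fintype C] [Fintype D] (n : C → ℕ) (m : D → ℕ) : Finset (C → D → ℕ) :=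
  {t ∈ Fintype.piFinset fun c => univ.piAntidiag (n c) | ∑ c, t c = m}

theorem mem_contingencyTables [Fintype C] [Fintype D] {n : C → ℕ} {m : D → ℕ} {t : C → D → ℕ} :
    t ∈ contingencyTables n m ↔ (∀ c, ∑ d, t c d = n c) ∧ ∀ d, ∑ c, t c d = m d := by
  simp [contingencyTables, funext_iff]

theorem sum_uncurry_of_mem_contingencyTables [Fintype C] [Fintype D] {n : C → ℕ} {m : D → ℕ}
    {t : C → D → ℕ} (ht : t ∈ contingencyTables n m) :
    ∑ x, Function.uncurry t x = ∑ c, n c := by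
  simp [Fintype.sum_prod_type, (mem_contingencyTables.1 ht).1]

theorem curry_content_mem_contingencyTables [Fintype C] [Fintype D] {n : C → ℕ} {m : D → ℕ}
    {f : α → C × D} : Function.curry (content f) ∈ contingencyTables n m ↔
      content (Prod.fst ∘ f) = n ∧ content (Prod.snd ∘ f) = m := by
  simp only [mem_contingencyTables, funext_iff, content_fst_comp, content_snd_comp,
    Function.curry_apply]

/-- Mackey's formula for permutation characters of Young subgroups. -/
theorem youngChar_mul [DecidableEq α] [Fintype C] [Fintype D] (n : C → ℕ) (m : D → ℕ)
    (σ : Equiv.Perm α) : youngChar n σ * youngChar m σ =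
      ∑ t ∈ contingencyTables n m, youngChar (Function.uncurry t) σ := by
  calc youngChar n σ * youngChar m σ
      = #{f : α → C × D | Function.curry (content f) ∈ contingencyTables n m ∧ f ∘ σ = f} := by
        rw [youngChar, youngChar, ← card_product]
        refine (card_equiv (Equiv.arrowProdEquivProdArrow α (fun _ => C) (fun _ => D)) ?_).symm
        intro f
        simp only [mem_filter_univ, mem_product, curry_content_mem_contingencyTables, funext_iff,
          Prod.ext_iff, forall_and, Function.comp_apply, Equiv.arrowProdEquivProdArrow_apply,
          content]
        tauto
    _ = ∑ t ∈ contingencyTables n m, youngChar (Function.uncurry t) σ := by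
        rw [card_eq_sum_card_fiberwise (f := fun f => Function.curry (content f))
          (t := contingencyTables n m) fun f hf => (mem_filter.1 hf).2.1]
        refine sum_congr rfl fun t ht => congrArg card ?_
        ext f
        have curry_eq_iff : Function.curry (content f) = t ↔ content f = Function.uncurry t :=
          ⟨fun h => by rw [← h, Function.uncurry_curry], fun h => by rw [h, Function.curry_uncurry]⟩
        simp only [mem_filter_univ, filter_filter, ← curry_eq_iff]
        exact ⟨fun h => ⟨h.2, h.1.2⟩, fun h => ⟨⟨h.1 ▸ ht, h.2⟩, h.1⟩⟩

theorem sum_youngChar_mul_mul [DecidableEq α] {E : Type*} [DecidableEq E] [Fintype C] [Fintype D]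
    [Fintype E] {n : C → ℕ} (hn : ∑ c, n c = Fintype.card α) (m : D → ℕ) (k : E → ℕ) :
    ∑ σ : Equiv.Perm α, youngChar n σ * youngChar m σ * youngChar k σ =
      (Fintype.card α).factorial *
        ∑ t ∈ contingencyTables n m, #(contingencyTables (Function.uncurry t) k) := by
  simp_rw [youngChar_mul, sum_mul, youngChar_mul]
  rw [sum_comm, mul_sum]
  refine sum_congr rfl fun t ht => ?_
  rw [sum_comm, card_eq_sum_ones, mul_sum]
  refine sum_congr rfl fun s hs => ?_
  rw [mul_one, sum_youngChar]
  rw [sum_uncurry_of_mem_contingencyTables hs, sum_uncurry_of_mem_contingencyTables ht, hn]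

end YoungCharacters

section ClebschGordan

theorem geom_sum_mul_geom_sum {R : Type*} [CommSemiring R] (x : R) (p e : ℕ) :
    (∑ i ∈ range (p + 1), x ^ i) * ∑ i ∈ range (p + e + 1), x ^ i =
      ∑ k ∈ antidiagonal p, x ^ k.2 * ∑ i ∈ range (2 * k.1 + e + 1), x ^ i := by
  induction p with
  | zero => simp
  | succ p ih =>
    have split_top : ∑ i ∈ range (2 * (p + 1) + e + 1), x ^ i =
        ∑ i ∈ range (p + e + 2), x ^ i + x ^ (p + e + 2) * ∑ i ∈ range (p + 1), x ^ i := by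
      rw [show 2 * (p + 1) + e + 1 = (p + e + 2) + (p + 1) by ring, sum_range_add, mul_sum]
      simp only [pow_add]
    have shift : ∑ k ∈ antidiagonal p, x ^ (k.2 + 1) * ∑ i ∈ range (2 * k.1 + e + 1), x ^ i =
        x * ∑ k ∈ antidiagonal p, x ^ k.2 * ∑ i ∈ range (2 * k.1 + e + 1), x ^ i := by
      simp only [mul_sum, pow_succ', mul_assoc]
    rw [Nat.sum_antidiagonal_succ', shift, ← ih, split_top, pow_zero, one_mul,
      show p + 1 + e + 1 = p + e + 2 by ring, geom_sum_succ (n := p + 1),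
      sum_range_succ _ (p + e + 1)]
    ring

open scoped Polynomial

/-- The character of the irreducible representation of `SL₂` of dimension `n + 1`, multiplied by
`q ^ n` and written in `X = q ^ 2` so as to become a polynomial. -/
noncomputable def slTwoChar (n : ℕ) : ℤ[X] := ∑ i ∈ range (n + 1), Polynomial.X ^ i

theorem coeff_slTwoChar (n k : ℕ) : (slTwoChar n).coeff k = if k ≤ n then 1 else 0 := by
  simp [slTwoChar, Polynomial.coeff_X_pow]

theorem slTwoChar_mul_slTwoChar (p e : ℕ) :
    slTwoChar p * slTwoChar (p + e) =
      ∑ k ∈ range (p + 1), Polynomial.X ^ (p - k) * slTwoChar (2 * k + e) := by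
  rw [slTwoChar, slTwoChar, geom_sum_mul_geom_sum, Nat.sum_antidiagonal_eq_sum_range_succ_mk]
  rfl

/-- Schur's lemma: multiplying by `1 - X` and taking the middle coefficient extracts the
multiplicity of the trivial representation of `SL₂`. -/
theorem coeff_one_sub_X_mul_slTwoChar_mul {a b j m : ℕ} (h : a + b + 2 * j = 2 * m) :
    ((1 - Polynomial.X) * (Polynomial.X ^ j * (slTwoChar a * slTwoChar b))).coeff m =
      if a = b then 1 else 0 := by
  have one_sub_X_mul : (1 - Polynomial.X) * slTwoChar a = 1 - Polynomial.X ^ (a + 1) :=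
    mul_neg_geom_sum _ _
  have expand : (1 - Polynomial.X) * (Polynomial.X ^ j * (slTwoChar a * slTwoChar b)) =
      Polynomial.X ^ j * slTwoChar b - Polynomial.X ^ (j + (a + 1)) * slTwoChar b := by
    linear_combination (Polynomial.X ^ j * slTwoChar b) * one_sub_X_mul
  rw [expand, Polynomial.coeff_sub, Polynomial.coeff_X_pow_mul', Polynomial.coeff_X_pow_mul',
    coeff_slTwoChar, coeff_slTwoChar]
  split_ifs <;> omega

theorem coeff_one_sub_X_mul_four_slTwoChar (p r f g : ℕ) :
    ((1 - Polynomial.X) * (slTwoChar p * slTwoChar (p + (f + 2 * g)) *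
      (slTwoChar r * slTwoChar (r + f)))).coeff (p + r + f + g) =
      ((min (p + 1) (r + 1 - g) : ℕ) : ℤ) := by
  have multiplicity (k l : ℕ) (hk : k ∈ range (p + 1)) (hl : l ∈ range (r + 1)) :
      ((1 - Polynomial.X) * (Polynomial.X ^ (p - k) * slTwoChar (2 * k + (f + 2 * g)) *
        (Polynomial.X ^ (r - l) * slTwoChar (2 * l + f)))).coeff (p + r + f + g) =
        if k + g = l then 1 else 0 := by
    rw [mem_range] at hk hl
    rw [mul_mul_mul_comm, ← pow_add, coeff_one_sub_X_mul_slTwoChar_mul (by omega)]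
    exact if_congr (by omega) rfl rfl
  have common_constituents : {k ∈ range (p + 1) | k + g ∈ range (r + 1)} =
      range (min (p + 1) (r + 1 - g)) := by
    ext k
    simp only [mem_filter, mem_range]
    omega
  rw [slTwoChar_mul_slTwoChar, slTwoChar_mul_slTwoChar, sum_mul_sum, mul_sum,
    Polynomial.finsetSum_coeff]
  simp only [mul_sum, Polynomial.finsetSum_coeff]
  rw [sum_congr rfl fun k hk => sum_congr rfl fun l hl => multiplicity k l hk hl]
  simp only [sum_ite_eq]
  rw [← sum_filter, common_constituents, sum_const, card_range, nsmul_one]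

theorem card_contingencyTables_fin_two {C : Type*} [Fintype C] [DecidableEq C] {n : C → ℕ}
    {k l : ℕ} (h : ∑ c, n c = k + l) :
    (#(contingencyTables n ![k, l]) : ℤ) = (∏ c, slTwoChar (n c)).coeff l := by
  have card_eq : #(contingencyTables n ![k, l]) =
      #{g ∈ Fintype.piFinset fun c => range (n c + 1) | l = ∑ c, g c} := by
    refine card_nbij' (fun t c => t c 1) (fun g c => ![n c - g c, g c]) ?_ ?_ ?_ ?_
    · intro t ht
      obtain ⟨hrow, hcol⟩ := mem_contingencyTables.1 ht
      simp only [Fin.sum_univ_two] at hrow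
      simp only [coe_filter, Fintype.mem_piFinset, mem_range, Set.mem_ofPred_eq]
      exact ⟨fun c => by have := hrow c; omega, (hcol 1).symm⟩
    · intro g hg
      simp only [coe_filter, Fintype.mem_piFinset, mem_range, Set.mem_ofPred_eq,
        Nat.lt_succ_iff] at hg
      obtain ⟨hle, rfl⟩ := hg
      refine mem_coe.2 (mem_contingencyTables.2 ⟨fun c => ?_, Fin.forall_fin_two.2 ⟨?_, rfl⟩⟩)
      · simpa using Nat.sub_add_cancel (hle c)
      · simp [sum_tsub_distrib _ fun c _ => hle c, h]
    · intro t ht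
      funext c
      have := (mem_contingencyTables.1 ht).1 c
      rw [Fin.sum_univ_two] at this
      refine funext (Fin.forall_fin_two.2 ⟨?_, rfl⟩)
      simp [← this]
    · exact fun _ _ => rfl
  simp only [slTwoChar, prod_univ_sum, prod_pow_eq_pow_sum, Polynomial.finsetSum_coeff,
    Polynomial.coeff_X_pow]
  rw [card_eq, card_filter]
  push_cast
  rfl

theorem card_contingencyTables_fin_two_sub {C : Type*} [Fintype C] [DecidableEq C] {n : C → ℕ}
    {k l : ℕ} (h : ∑ c, n c = k + l + 1) :
    (#(contingencyTables n ![k, l + 1]) : ℤ) - #(contingencyTables n ![k + 1, l]) =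
      ((1 - Polynomial.X) * ∏ c, slTwoChar (n c)).coeff (l + 1) := by
  rw [card_contingencyTables_fin_two (by omega), card_contingencyTables_fin_two (by omega),
    sub_mul, one_mul, Polynomial.coeff_sub, Polynomial.coeff_X_mul]

theorem sum_contingencyTables_fin_two {M : Type*} [AddCommMonoid M] (a e f : ℕ)
    (F : (Fin 2 → Fin 2 → ℕ) → M) :
    ∑ t ∈ contingencyTables ![a + e + f, a] ![a + e, a + f], F t =
      ∑ x ∈ antidiagonal a, F ![![x.1 + e, x.2 + f], ![x.2, x.1]] := by
  have mem_iff {t : Fin 2 → Fin 2 → ℕ} :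
      t ∈ contingencyTables ![a + e + f, a] ![a + e, a + f] ↔
        (t 0 0 + t 0 1 = a + e + f ∧ t 1 0 + t 1 1 = a) ∧
          t 0 0 + t 1 0 = a + e ∧ t 0 1 + t 1 1 = a + f := by
    simp [mem_contingencyTables, Fin.forall_fin_two]
  have left_inv {t : Fin 2 → Fin 2 → ℕ}
      (ht : t ∈ contingencyTables ![a + e + f, a] ![a + e, a + f]) :
      ![![t 1 1 + e, t 1 0 + f], ![t 1 0, t 1 1]] = t := by
    have := mem_iff.1 ht
    ext i j
    fin_cases i <;> fin_cases j <;> simp <;> omega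
  refine sum_nbij' (fun t => (t 1 1, t 1 0)) (fun x => ![![x.1 + e, x.2 + f], ![x.2, x.1]])
    ?_ ?_ (fun _ ht => left_inv ht) (fun _ _ => rfl) (fun _ ht => by rw [left_inv ht])
  · intro t ht
    exact mem_antidiagonal.2 ((add_comm _ _).trans (mem_iff.1 ht).1.2)
  · intro x hx
    obtain rfl := mem_antidiagonal.1 hx
    simp only [mem_iff, Matrix.cons_val_zero, Matrix.cons_val_one]
    omega

end ClebschGordan

section Antidiagonal

theorem sum_antidiagonal_min : ∀ n : ℕ, ∑ x ∈ antidiagonal n, min x.1 x.2 = n ^ 2 / 4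
  | 0 => rfl
  | 1 => rfl
  | n + 2 => by
    rw [Nat.sum_antidiagonal_succ, Nat.sum_antidiagonal_succ']
    simp only [Nat.zero_min, Nat.min_zero, zero_add, Nat.add_min_add_right, sum_add_distrib,
      sum_const, Nat.card_antidiagonal, sum_antidiagonal_min n, smul_eq_mul, mul_one]
    rw [show (n + 2) ^ 2 = n ^ 2 + (n + 1) * 4 by ring, Nat.add_mul_div_right _ _ four_pos]

theorem sum_antidiagonal_min_succ_left (n : ℕ) :
    ∑ x ∈ antidiagonal n, min (x.1 + 1) x.2 = (n + 1) ^ 2 / 4 := by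
  rw [← sum_antidiagonal_min, Nat.sum_antidiagonal_succ, Nat.zero_min, zero_add]

theorem sum_antidiagonal_min_succ_succ (n : ℕ) :
    ∑ x ∈ antidiagonal n, min (x.1 + 1) (x.2 + 1) = (n + 2) ^ 2 / 4 := by
  rw [← sum_antidiagonal_min_succ_left, Nat.sum_antidiagonal_succ', Nat.min_zero, zero_add]

theorem two_mul_sq_div_four (k : ℕ) : (2 * k) ^ 2 / 4 = k ^ 2 := by
  rw [mul_pow]
  exact Nat.mul_div_cancel_left _ four_pos

theorem two_mul_add_one_sq_div_four (k : ℕ) : (2 * k + 1) ^ 2 / 4 = k * (k + 1) := by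
  rw [show (2 * k + 1) ^ 2 = 1 + 4 * (k * (k + 1)) by ring, Nat.add_mul_div_left _ _ four_pos]
  exact zero_add _

end Antidiagonal

section JacobiTrudi

theorem coeff_prod_X {α C R : Type*} [Fintype α] [Fintype C] [DecidableEq C] [CommSemiring R]
    (f : α → C) (m : C →₀ ℕ) :
    coeff m (∏ a, X (f a) : MvPolynomial C R) = if content f = m then 1 else 0 := by
  have content_eq : content f = ⇑(∑ a, Finsupp.single (f a) 1) := by
    ext c
    simp only [Finsupp.finsetSum_apply, Finsupp.single_apply, content, card_filter]
  have prod_eq : (∏ a, X (f a) : MvPolynomial C R) = monomial (∑ a, Finsupp.single (f a) 1) 1 :=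
    (monomial_sum_one _ _).symm
  rw [prod_eq, coeff_monomial, content_eq]
  exact if_congr DFunLike.coe_fn_eq.symm rfl rfl

theorem coeff_permPowSum {d : ℕ} (σ : Equiv.Perm (Fin d)) (m : Fin d →₀ ℕ) :
    coeff m (permPowSum d σ) = youngChar m σ := by
  have permPowSum_eq : permPowSum d σ = ∑ f : Fin d → Fin d with f ∘ σ = f, ∏ i, X (f i) := by
    rw [sum_prod_of_comp_perm_eq]
    refine .symm ((CycleClass.prod_card σ (powSum d)).trans ?_)
    rw [Fintype.card_fin, permPowSum]
  rw [permPowSum_eq, coeff_sum]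
  simp only [coeff_prod_X]
  rw [← natCast_card_filter, filter_filter, youngChar]
  simp only [and_comm]

theorem vandermonde_eq_det (d : ℕ) :
    vandermonde d = (Matrix.projVandermonde 1 X).det := by
  simp only [vandermonde, Matrix.det_projVandermonde, Pi.one_apply, one_mul]
  rw [← univ_product_univ, prod_filter, prod_product]
  simp only [← prod_filter, filter_lt_eq_Ioi]

theorem vandermonde_eq_sum (d : ℕ) :
    vandermonde d = ∑ w : Equiv.Perm (Fin d),
      monomial (Finsupp.equivFunOnFinite.symm fun j => ((w j).rev : ℕ)) (w.sign : ℤ) := by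
  rw [vandermonde_eq_det, ← Matrix.det_transpose, Matrix.det_apply']
  refine sum_congr rfl fun w _ => ?_
  rw [monomial_eq, Finsupp.prod_fintype _ _ fun _ => pow_zero _]
  simp [Matrix.projVandermonde_apply]

/-- Jacobi–Trudi formula. -/
theorem chi_eq_sum_sign {d : ℕ} (lam : ℕ → ℕ) (σ : Equiv.Perm (Fin d)) :
    chi d lam σ = ∑ w : Equiv.Perm (Fin d), if ∀ j : Fin d, (j : ℕ) ≤ lam j + w j then
      (w.sign : ℤ) * youngChar (fun j : Fin d => lam j + w j - j) σ else 0 := by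
  rw [chi, vandermonde_eq_sum, sum_mul, coeff_sum]
  refine sum_congr rfl fun w _ => ?_
  rw [coeff_monomial_mul', coeff_permPowSum]
  refine if_congr (forall_congr' fun j => ?_) ?_ rfl
  · simp only [staircase, Finsupp.equivFunOnFinite_symm_apply_apply, Fin.val_rev]
    omega
  · congr 3
    ext j
    simp only [staircase, Finsupp.tsub_apply, Finsupp.equivFunOnFinite_symm_apply_apply,
      Fin.val_rev]
    omega

theorem apply_eq_self_of_le_apply {ι : Type*} [PartialOrder ι] [WellFoundedGT ι] {w : ι → ι}
    (hw : w.Injective) {s : Set ι} (hs : IsUpperSet s) (hle : ∀ i ∈ s, i ≤ w i) {i : ι}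
    (hi : i ∈ s) : w i = i := by
  induction i using WellFoundedGT.induction with
  | ind i ih =>
    by_contra hne
    exact hne (hw (ih (w i) ((hle i hi).lt_of_ne' hne) (hs (hle i hi) hi)))

theorem eq_one_or_eq_swap {ι : Type*} [DecidableEq ι] {a b : ι} {w : Equiv.Perm ι}
    (hw : ∀ i, i ≠ a → i ≠ b → w i = i) : w = 1 ∨ w = Equiv.swap a b := by
  have eq_one {u : Equiv.Perm ι} (hu : ∀ i, i ≠ b → u i = i) : u = 1 := by
    ext i
    by_contra hi
    have hib : i = b := by_contra fun h => hi (hu i h)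
    exact hi (u.injective (hu (u i) (hib ▸ hi)))
  by_cases haa : w a = a
  · exact .inl (eq_one fun i hi => (eq_or_ne i a).elim (fun h => h ▸ haa) fun h => hw i h hi)
  · have hab : w a = b := by_contra fun h => haa (w.injective (hw (w a) haa h))
    have swap_mul_eq_one : Equiv.swap a b * w = 1 := eq_one fun i hi => by
      rw [Equiv.Perm.mul_apply]
      obtain rfl | hia := eq_or_ne i a
      · rw [hab, Equiv.swap_apply_right]
      · rw [hw i hia hi, Equiv.swap_apply_of_ne_of_ne hia hi]
    exact .inr (eq_inv_of_mul_eq_one_right swap_mul_eq_one)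

theorem youngChar_eq_fin_two {n : ℕ} {α : Type*} [Fintype α] [DecidableEq α]
    {m : Fin (n + 2) → ℕ} (hm : ∀ i : Fin (n + 2), 2 ≤ (i : ℕ) → m i = 0) (σ : Equiv.Perm α) :
    youngChar m σ = youngChar ![m 0, m 1] σ := by
  rw [← youngChar_comp_embedding (Fin.castLEEmb (Nat.le_add_left 2 n)) (fun i hi => hm i ?_)]
  · congr 1
    exact List.ofFn_inj.1 rfl
  · contrapose! hi
    exact ⟨⟨i, hi⟩, rfl⟩

theorem swap_zero_one_apply {n : ℕ} {i : Fin (n + 2)} (hi : 2 ≤ (i : ℕ)) :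
    Equiv.swap 0 1 i = i :=
  Equiv.swap_apply_of_ne_of_ne (by rintro rfl; simp at hi) (by rintro rfl; simp at hi)

theorem forall_le_add_apply_iff {n : ℕ} {lam : ℕ → ℕ} (hone : 1 ≤ lam 1)
    (htwo : ∀ i ≥ 2, lam i = 0) {w : Equiv.Perm (Fin (n + 2))} :
    (∀ j : Fin (n + 2), (j : ℕ) ≤ lam j + w j) ↔ w = 1 ∨ w = Equiv.swap 0 1 := by
  have two_le {i : Fin (n + 2)} (h0 : i ≠ 0) (h1 : i ≠ 1) : 2 ≤ (i : ℕ) := by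
    rw [Ne, Fin.ext_iff, Fin.val_zero] at h0
    rw [Ne, Fin.ext_iff, Fin.val_one] at h1
    omega
  refine ⟨fun hle => eq_one_or_eq_swap fun i h0 h1 => ?_, ?_⟩
  · have upper : IsUpperSet {i : Fin (n + 2) | 2 ≤ (i : ℕ)} := fun i j hij hi =>
      le_trans (Set.mem_ofPred.1 hi) hij
    refine apply_eq_self_of_le_apply w.injective upper (fun j hj => ?_) (two_le h0 h1)
    simpa [htwo j hj] using hle j
  · rintro (rfl | rfl) j
    · exact Nat.le_add_left _ _
    · obtain rfl | h0 := eq_or_ne j 0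
      · exact Nat.zero_le _
      obtain rfl | h1 := eq_or_ne j 1
      · simpa using hone
      rw [swap_zero_one_apply (two_le h0 h1)]
      exact Nat.le_add_left _ _

theorem chi_eq_youngChar_sub {n k : ℕ} {lam : ℕ → ℕ} (hone : lam 1 = k + 1)
    (htwo : ∀ i ≥ 2, lam i = 0) (σ : Equiv.Perm (Fin (n + 2))) :
    chi (n + 2) lam σ = (youngChar ![lam 0, k + 1] σ : ℤ) - youngChar ![lam 0 + 1, k] σ := by
  have term_one : youngChar (fun j : Fin (n + 2) => lam j + (1 : Equiv.Perm (Fin _)) j - j) σ =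
      youngChar ![lam 0, k + 1] σ := by
    rw [youngChar_eq_fin_two fun i hi => by simp [htwo i hi]]
    simp [hone]
  have term_swap : youngChar (fun j : Fin (n + 2) => lam j + Equiv.swap 0 1 j - j) σ =
      youngChar ![lam 0 + 1, k] σ := by
    rw [youngChar_eq_fin_two fun i hi => by simp [htwo i hi, swap_zero_one_apply hi]]
    simp [hone]
  have one_ne_swap : (1 : Equiv.Perm (Fin (n + 2))) ≠ Equiv.swap 0 1 := fun h => by
    simpa using congrArg (· 0) h
  have nonzero_terms : ({w | ∀ j : Fin (n + 2), (j : ℕ) ≤ lam j + w j} :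
      Finset (Equiv.Perm (Fin (n + 2)))) = {1, Equiv.swap 0 1} := by
    ext w
    simp [forall_le_add_apply_iff (hone ▸ Nat.le_add_left 1 k) htwo]
  rw [chi_eq_sum_sign, ← sum_filter, nonzero_terms, sum_pair one_ne_swap, term_one, term_swap,
    Equiv.Perm.sign_one, Equiv.Perm.sign_swap zero_ne_one]
  simp [sub_eq_add_neg]

end JacobiTrudi

section KroneckerCoefficient

/-- The margins are chosen so that the `2 × 2` tables having them are exactly those with entries
`p`, `p + (f + 2 * g)`, `r`, `r + f` for `p + r = a`, as in `coeff_one_sub_X_mul_four_slTwoChar`. -/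
theorem sum_youngChar_mul_mul_sub {α : Type*} [Fintype α] [DecidableEq α] {N a f g : ℕ}
    (hα : Fintype.card α = 2 * (N + 1)) (h : a + f + g = N + 1) :
    ∑ σ : Equiv.Perm α, (youngChar ![a + (f + 2 * g) + f, a] σ : ℤ) *
        youngChar ![a + (f + 2 * g), a + f] σ *
        (youngChar ![N + 1, N + 1] σ - youngChar ![N + 2, N] σ) =
      (2 * (N + 1)).factorial *
        ∑ x ∈ antidiagonal a, ((min (x.1 + 1) (x.2 + 1 - g) : ℕ) : ℤ) := by
  have hcard : ∑ i, ![a + (f + 2 * g) + f, a] i = Fintype.card α := by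
    rw [Fin.sum_univ_two, hα, Matrix.cons_val_zero, Matrix.cons_val_one, Matrix.cons_val_zero]
    omega
  have sum_mul_mul (k : Fin 2 → ℕ) := congrArg (Nat.cast : ℕ → ℤ)
    (sum_youngChar_mul_mul hcard ![a + (f + 2 * g), a + f] k)
  push_cast at sum_mul_mul
  simp only [mul_sub, sum_sub_distrib, sum_mul_mul]
  rw [← mul_sub, ← sum_sub_distrib, hα, sum_contingencyTables_fin_two a (f + 2 * g) f]
  congr 1
  refine sum_congr rfl fun x hx => ?_
  obtain rfl := mem_antidiagonal.1 hx
  have prod_eq : ∏ c, slTwoChar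
      (Function.uncurry ![![x.1 + (f + 2 * g), x.2 + f], ![x.2, x.1]] c) =
        slTwoChar x.1 * slTwoChar (x.1 + (f + 2 * g)) * (slTwoChar x.2 * slTwoChar (x.2 + f)) := by
    simp only [Fintype.prod_prod_type, Fin.prod_univ_two, Function.uncurry_apply_pair,
      Matrix.cons_val_zero, Matrix.cons_val_one]
    ring
  rw [card_contingencyTables_fin_two_sub, prod_eq, ← h, coeff_one_sub_X_mul_four_slTwoChar]
  simp only [Fintype.sum_prod_type, Fin.sum_univ_two, Function.uncurry_apply_pair,
    Matrix.cons_val_zero, Matrix.cons_val_one]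
  omega

theorem sum_youngChar_sub_pow_three {α : Type*} [Fintype α] [DecidableEq α] {N : ℕ}
    (hα : Fintype.card α = 2 * (N + 1)) :
    ∑ σ : Equiv.Perm α, ((youngChar ![N + 1, N + 1] σ : ℤ) - youngChar ![N + 2, N] σ) ^ 3 =
      (2 * (N + 1)).factorial *
        (((N + 3) ^ 2 / 4 : ℕ) - 2 * ((N + 2) ^ 2 / 4 : ℕ) + ((N + 1) ^ 2 / 4 : ℕ)) := by
  have fst_sq := sum_youngChar_mul_mul_sub (a := N + 1) (f := 0) (g := 0) hα rfl
  have mixed := sum_youngChar_mul_mul_sub (a := N) (f := 1) (g := 0) hα rfl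
  have snd_sq := sum_youngChar_mul_mul_sub (a := N) (f := 0) (g := 1) hα rfl
  rw [← Nat.cast_sum] at fst_sq mixed snd_sq
  simp only [mul_zero, mul_one, zero_add, add_zero, Nat.sub_zero, add_tsub_cancel_right,
    sum_antidiagonal_min_succ_succ, sum_antidiagonal_min_succ_left] at fst_sq mixed snd_sq
  rw [mul_add, mul_sub, mul_left_comm, ← fst_sq, ← mixed, ← snd_sq, mul_sum, ← sum_sub_distrib,
    ← sum_add_distrib]
  exact sum_congr rfl fun σ _ => by ring

theorem gKron_twoRow_succ (N : ℕ) :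
    gKron (2 * (N + 1)) (twoRow (N + 1)) (twoRow (N + 1)) (twoRow (N + 1)) =
      ((N + 3) ^ 2 / 4 : ℕ) - 2 * ((N + 2) ^ 2 / 4 : ℕ) + ((N + 1) ^ 2 / 4 : ℕ) := by
  have chi_eq (σ : Equiv.Perm (Fin (2 * (N + 1)))) : chi (2 * (N + 1)) (twoRow (N + 1)) σ =
      (youngChar ![N + 1, N + 1] σ : ℤ) - youngChar ![N + 2, N] σ :=
    chi_eq_youngChar_sub (n := 2 * N) (k := N) (lam := twoRow (N + 1)) rfl
      (fun i hi => if_neg hi.not_gt) σ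
  simp only [gKron, chi_eq, ← sq, ← pow_succ]
  rw [sum_youngChar_sub_pow_three (Fintype.card_fin _)]
  exact Int.mul_ediv_cancel_left _ (Nat.cast_ne_zero.2 (Nat.factorial_ne_zero _))

theorem gKron_twoRow_zero : gKron (2 * 0) (twoRow 0) (twoRow 0) (twoRow 0) = 1 := by
  have chi_eq_one (σ : Equiv.Perm (Fin 0)) : chi 0 (twoRow 0) σ = 1 := by
    have youngChar_eq_one (n : Fin 0 → ℕ) : youngChar n σ = 1 := by
      simp [youngChar, eq_iff_true_of_subsingleton]
    simp [chi_eq_sum_sign, youngChar_eq_one, Equiv.Perm.default_eq]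
  rw [mul_zero, gKron]
  simp only [chi_eq_one]
  simp

theorem gKron_twoRow (N : ℕ) : gKron (2 * N) (twoRow N) (twoRow N) (twoRow N) =
    ((N + 2) ^ 2 / 4 : ℕ) - 2 * ((N + 1) ^ 2 / 4 : ℕ) + (N ^ 2 / 4 : ℕ) := by
  cases N with
  | zero => rw [gKron_twoRow_zero]; rfl
  | succ N => exact gKron_twoRow_succ N

end KroneckerCoefficient

/-- `g_{(N,N),(N,N)}^{(N,N)}` equals `0` for odd `N` and `1` for even `N`. -/
theorem kron_NN (N : ℕ) :
    (Odd N → gKron (2 * N) (twoRow N) (twoRow N) (twoRow N) = 0) ∧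
    (Even N → gKron (2 * N) (twoRow N) (twoRow N) (twoRow N) = 1) := by
  rw [gKron_twoRow]
  constructor
  · rintro ⟨k, rfl⟩
    rw [show 2 * k + 1 + 2 = 2 * (k + 1) + 1 by ring, show 2 * k + 1 + 1 = 2 * (k + 1) by ring,
      two_mul_sq_div_four, two_mul_add_one_sq_div_four, two_mul_add_one_sq_div_four]
    push_cast
    ring
  · rw [even_iff_exists_two_mul]
    rintro ⟨k, rfl⟩
    rw [show 2 * k + 2 = 2 * (k + 1) by ring, two_mul_sq_div_four, two_mul_sq_div_four,
      two_mul_add_one_sq_div_four]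
    push_cast
    ring
end

section
/- The reduced Kronecker coefficient ḡ_{λμ}^ν vanishes unless the triangle inequalities hold: |ν| ≤ |λ|+|μ|, |μ| ≤ |λ|+|ν|, and |λ| ≤ |μ|+|ν| (the Murnaghan–Littlewood inequalities). Equivalently, if any of these fails, then for all sufficiently large d the Kronecker coefficient g_{λ[d],μ[d]}^{ν[d]} = 0. -/
open MvPolynomial

/-! The product of power sums attached to `σ` is the sum of the monomials `∏ i, x_{g i}` over the
words `g : Fin d → Fin d` with `g ∘ σ = g`, so Frobenius' formula writes `χ^λ(σ)` as a sum over
these words. As `a_δ` has degree `d - 1` in the first variable, a word contributes only if it takes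
the value `0` at least `λ₁` times. Therefore `∑ σ, χ^λ(σ) χ^μ(σ) χ^ν(σ)` is a combination of sums of
`χ^ν` over Young subgroups, namely the stabilizers of pairs of words `(f, g)`, each having a block
`f = g = 0` of size at least `λ₁ + μ₁ - d`. By Pieri's rule the sum of `χ^ν` over a Young subgroup
vanishes once some block is larger than `ν₁`, so `g_{λμ}^ν = 0` whenever `λ₁ + μ₁ > d + ν₁`. For the
padded partitions this condition is `|λ| + |μ| < |ν|`, and `g_{λμ}^ν` is symmetric in its three
arguments. -/

section AlternatingCoefficients

variable {κ R : Type*}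

section CompleteHomogeneous

variable [CommSemiring R] [DecidableEq κ]

theorem prod_map_X_eq_monomial (s : Multiset κ) :
    (s.map X).prod = monomial (R := R) (Multiset.toFinsupp s) 1 := by
  induction s using Multiset.induction_on with
  | empty => simp
  | cons a t ih =>
    rw [Multiset.map_cons, Multiset.prod_cons, ih, ← Multiset.singleton_add, map_add,
      Multiset.toFinsupp_singleton, X, monomial_mul, one_mul]

variable [Fintype κ]

theorem hsymm_eq_sum_monomial (n : ℕ) :
    hsymm κ R n = ∑ s : Sym κ n, monomial (Multiset.toFinsupp (s : Multiset κ)) 1 :=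
  Finset.sum_congr rfl fun s _ => prod_map_X_eq_monomial s.1

theorem coeff_hsymm (n : ℕ) (b : κ →₀ ℕ) :
    coeff b (hsymm κ R n) = if b.degree = n then 1 else 0 := by
  rw [hsymm_eq_sum_monomial, coeff_sum]
  simp only [coeff_monomial]
  split_ifs with hb
  · have hcard : (Finsupp.toMultiset b).card = n := by
      rw [Finsupp.card_toMultiset, ← hb, Finsupp.degree_apply, Finsupp.sum]; rfl
    rw [Fintype.sum_eq_single (Sym.mk _ hcard)]
    · simp
    · intro s hs
      refine if_neg fun h => hs (Subtype.ext ?_)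
      simp [← h]
  · refine Finset.sum_eq_zero fun s _ => if_neg ?_
    rintro rfl
    refine hb ?_
    exact (Finsupp.card_toMultiset _).symm.trans (by simp)

theorem coeff_hsymm_mul (n : ℕ) (e : κ →₀ ℕ) (G : MvPolynomial κ R) :
    coeff e (hsymm κ R n * G) =
      ∑ c ∈ Finset.Iic e with c.degree + n = e.degree, coeff c G := by
  simp only [coeff_mul, coeff_hsymm, ite_mul, one_mul, zero_mul]
  rw [← Finset.sum_filter]
  refine Finset.sum_nbij' Prod.snd (fun c => (e - c, c)) ?_ ?_ ?_ ?_ ?_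
  · rintro ⟨b, c⟩ h
    simp only [Finset.mem_filter, Finset.HasAntidiagonal.mem_antidiagonal, Finset.mem_Iic] at h ⊢
    obtain ⟨rfl, rfl⟩ := h
    exact ⟨le_add_self, by rw [map_add, add_comm]⟩
  · intro c h
    simp only [Finset.mem_filter, Finset.HasAntidiagonal.mem_antidiagonal, Finset.mem_Iic] at h ⊢
    have hsum := tsub_add_cancel_of_le h.1
    have hdeg := congrArg Finsupp.degree hsum
    rw [map_add] at hdeg
    exact ⟨hsum, by omega⟩
  · rintro ⟨b, c⟩ h
    simp only [Finset.mem_filter, Finset.HasAntidiagonal.mem_antidiagonal] at h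
    simp [← h.1]
  · simp
  · simp

end CompleteHomogeneous

variable [CommRing R] [IsAddTorsionFree R]

theorem sum_coeff_eq_zero_of_rename_swap_eq_neg [DecidableEq κ] {a b : κ}
    {G : MvPolynomial κ R} (hG : rename (Equiv.swap a b) G = -G) (S : Finset (κ →₀ ℕ))
    (hS : ∀ c ∈ S, c.mapDomain (Equiv.swap a b) ∈ S) : ∑ c ∈ S, coeff c G = 0 := by
  have hinv (c : κ →₀ ℕ) : (c.mapDomain (Equiv.swap a b)).mapDomain (Equiv.swap a b) = c := by
    rw [← Finsupp.mapDomain_comp, ← Equiv.coe_trans, Equiv.swap_swap, Equiv.coe_refl,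
      Finsupp.mapDomain_id]
  have hcoeff (c : κ →₀ ℕ) : coeff c G = -coeff (c.mapDomain (Equiv.swap a b)) G := by
    rw [← coeff_neg, ← hG, coeff_rename_mapDomain _ (Equiv.injective _)]
  rw [← self_eq_neg, ← Finset.sum_neg_distrib]
  exact Finset.sum_nbij' (Finsupp.mapDomain (Equiv.swap a b)) (Finsupp.mapDomain (Equiv.swap a b))
    hS hS (fun c _ => hinv c) (fun c _ => hinv c) (fun c _ => hcoeff c)

variable {k : ℕ}

/-- The exponents `c ≤ e` of total degree `|e| - n` whose first `i` entries satisfy the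
interlacing condition `e (j + 1) < c j`. -/
noncomputable def interlacingExponents (e : Fin (k + 1) →₀ ℕ) (n i : ℕ) :
    Finset (Fin (k + 1) →₀ ℕ) :=
  {c ∈ Finset.Iic e | c.degree + n = e.degree ∧
    ∀ j : Fin k, (j : ℕ) < i → e j.succ < c j.castSucc}

theorem mem_interlacingExponents {e c : Fin (k + 1) →₀ ℕ} {n i : ℕ} :
    c ∈ interlacingExponents e n i ↔ c ≤ e ∧ c.degree + n = e.degree ∧
      ∀ j : Fin k, (j : ℕ) < i → e j.succ < c j.castSucc := by
  rw [interlacingExponents, Finset.mem_filter, Finset.mem_Iic]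

theorem mapDomain_swap_mem_interlacingExponents {e c : Fin (k + 1) →₀ ℕ} (he : Antitone e)
    {n : ℕ} {i : Fin k} (hc : c ∈ interlacingExponents e n i) (hi : c i.castSucc ≤ e i.succ) :
    c.mapDomain (Equiv.swap i.castSucc i.succ) ∈ interlacingExponents e n i := by
  rw [mem_interlacingExponents] at hc ⊢
  obtain ⟨hle, hdeg, hlt⟩ := hc
  refine ⟨fun x => ?_, by rwa [Finsupp.degree_mapDomain], fun j hj => ?_⟩
  · rw [Finsupp.mapDomain_equiv_apply, Equiv.symm_swap]
    rcases eq_or_ne x i.castSucc with rfl | hx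
    · rw [Equiv.swap_apply_left]
      exact (hle _).trans (he (Fin.castSucc_lt_succ).le)
    rcases eq_or_ne x i.succ with rfl | hx'
    · rwa [Equiv.swap_apply_right]
    rw [Equiv.swap_apply_of_ne_of_ne hx hx']
    exact hle x
  · rw [Finsupp.mapDomain_equiv_apply, Equiv.symm_swap, Equiv.swap_apply_of_ne_of_ne]
    · exact hlt j hj
    · exact (Fin.castSucc_lt_castSucc_iff.2 hj).ne
    · exact ((Fin.castSucc_lt_castSucc_iff.2 hj).trans Fin.castSucc_lt_succ).ne

theorem sum_coeff_interlacingExponents_succ {e : Fin (k + 1) →₀ ℕ}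
    (he : Antitone e) (n : ℕ) (i : Fin k) {G : MvPolynomial (Fin (k + 1)) R}
    (hG : rename (Equiv.swap i.castSucc i.succ) G = -G) :
    ∑ c ∈ interlacingExponents e n (i + 1), coeff c G =
      ∑ c ∈ interlacingExponents e n i, coeff c G := by
  have hsplit : interlacingExponents e n (i + 1) =
      {c ∈ interlacingExponents e n i | ¬ c i.castSucc ≤ e i.succ} := by
    ext c
    simp only [Finset.mem_filter, mem_interlacingExponents, Nat.lt_succ_iff_lt_or_eq, not_le,
      or_imp, forall_and, and_assoc, Fin.val_inj, forall_eq]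
  have hcancel : ∑ c ∈ interlacingExponents e n i with c i.castSucc ≤ e i.succ, coeff c G = 0 := by
    refine sum_coeff_eq_zero_of_rename_swap_eq_neg hG _ fun c hc => ?_
    rw [Finset.mem_filter] at hc ⊢
    refine ⟨mapDomain_swap_mem_interlacingExponents he hc.1 hc.2, ?_⟩
    rw [Finsupp.mapDomain_equiv_apply, Equiv.symm_swap, Equiv.swap_apply_left]
    exact (mem_interlacingExponents.1 hc.1).1 _
  rw [hsplit, ← zero_add (∑ c ∈ _, _), ← hcancel, Finset.sum_filter_add_sum_filter_not]

theorem interlacingExponents_eq_empty {e : Fin (k + 1) →₀ ℕ} {n : ℕ} (hn : e 0 < n + k) :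
    interlacingExponents e n k = ∅ := by
  refine Finset.eq_empty_of_forall_notMem fun c hc => ?_
  obtain ⟨-, hdeg, hlt⟩ := mem_interlacingExponents.1 hc
  have hsum : ∑ j : Fin k, (e j.succ + 1) ≤ ∑ j : Fin k, c j.castSucc :=
    Finset.sum_le_sum fun j _ => hlt j j.isLt
  rw [Finset.sum_add_distrib, Finset.sum_const, Finset.card_univ, Fintype.card_fin, smul_eq_mul,
    mul_one] at hsum
  rw [Finsupp.degree_eq_sum, Finsupp.degree_eq_sum, Fin.sum_univ_castSucc (fun j => c j),
    Fin.sum_univ_succ (fun j => e j)] at hdeg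
  omega

-- The exponents violating one more interlacing condition are stable under a transposition, so their
-- coefficients cancel; and no exponent of degree `|e| - n` interlaces with `e` when `n` is large.
theorem coeff_hsymm_mul_eq_zero_of_alternating {e : Fin (k + 1) →₀ ℕ}
    (he : Antitone e) {n : ℕ} (hn : e 0 < n + k) {G : MvPolynomial (Fin (k + 1)) R}
    (hG : ∀ i : Fin k, rename (Equiv.swap i.castSucc i.succ) G = -G) :
    coeff e (hsymm (Fin (k + 1)) R n * G) = 0 := by
  have hconst (i : ℕ) (hi : i ≤ k) : ∑ c ∈ interlacingExponents e n i, coeff c G =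
      ∑ c ∈ interlacingExponents e n 0, coeff c G := by
    induction i with
    | zero => rfl
    | succ i ih =>
      rw [← ih (by omega)]
      exact sum_coeff_interlacingExponents_succ he n ⟨i, hi⟩ (hG _)
  calc coeff e (hsymm (Fin (k + 1)) R n * G)
      = ∑ c ∈ interlacingExponents e n 0, coeff c G := by
        simp [coeff_hsymm_mul, interlacingExponents]
    _ = ∑ c ∈ interlacingExponents e n k, coeff c G := (hconst k le_rfl).symm
    _ = 0 := by rw [interlacingExponents_eq_empty hn, Finset.sum_empty]

end AlternatingCoefficients

section Words

variable {ι κ R : Type*} [Fintype ι] [CommSemiring R]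

section

variable [Fintype κ] [DecidableEq ι]

theorem sum_word_eq_sum_X_pow :
    ∑ g : ι → κ, ∏ i, X (g i) = (∑ c, X c : MvPolynomial κ R) ^ Fintype.card ι := by
  rw [← Fintype.prod_sum (fun (_ : ι) (c : κ) => (X c : MvPolynomial κ R)), Finset.prod_const,
    Finset.card_univ]

theorem prod_psum_card_fiber {T : Type*} [Fintype T] [DecidableEq T] {q : ι → T}
    (hq : Function.Surjective q) [DecidablePred fun g : ι → κ => g.FactorsThrough q] :
    ∏ t, psum κ R (Fintype.card {i // q i = t}) =
      ∑ g : ι → κ with g.FactorsThrough q, ∏ i, X (g i) := by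
  simp only [psum]
  rw [Fintype.prod_sum]
  refine Finset.sum_bij (fun h _ => h ∘ q) ?_ ?_ ?_ ?_
  · exact fun h _ => Finset.mem_filter.2 ⟨Finset.mem_univ _, fun x y hxy => congrArg h hxy⟩
  · exact fun h _ h' _ hh => hq.injective_comp_right hh
  · intro g hg
    refine ⟨g ∘ Function.surjInv hq, Finset.mem_univ _, funext fun x => ?_⟩
    exact (Finset.mem_filter.1 hg).2 (Function.surjInv_eq hq _)
  · intro h _
    simp only [Function.comp_apply]
    rw [← Fintype.prod_fiberwise' q fun t => (X (h t) : MvPolynomial κ R)]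
    simp only [Finset.prod_const, Finset.card_univ]

end

variable [DecidableEq κ]

/-- The content of a word `g : ι → κ`: the exponent recording how often each letter occurs,
so that `∏ i, X (g i)` is the monomial with this exponent. -/
noncomputable def wordContent (g : ι → κ) : κ →₀ ℕ := Multiset.toFinsupp (Finset.univ.val.map g)

theorem wordContent_apply (g : ι → κ) (c : κ) :
    wordContent g c = Fintype.card {i // g i = c} := by
  simp only [wordContent, Multiset.toFinsupp_apply, Multiset.count_map, Fintype.card_subtype,
    eq_comm (a := c)]
  rfl

theorem prod_X_eq_monomial_wordContent (g : ι → κ) :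
    ∏ i, X (g i) = monomial (R := R) (wordContent g) 1 := by
  rw [wordContent, ← prod_map_X_eq_monomial, Multiset.map_map]
  rfl

variable [Fintype κ] [DecidableEq ι]

theorem sum_prod_factorial_smul_word :
    ∑ g : ι → κ, (∏ c, (Fintype.card {i // g i = c}).factorial) • ∏ i, X (g i) =
      (Fintype.card ι).factorial • hsymm κ R (Fintype.card ι) := by
  ext b
  have hword (g : ι → κ) :
      coeff b ((∏ c, (Fintype.card {i // g i = c}).factorial) • ∏ i, X (g i)) =
        (∏ c, (b c).factorial) • coeff b (∏ i, X (R := R) (g i)) := by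
    rw [coeff_smul, prod_X_eq_monomial_wordContent, coeff_monomial]
    split_ifs with h
    · simp only [← h, wordContent_apply]
    · simp only [smul_zero]
  simp only [coeff_sum, hword, ← Finset.smul_sum]
  rw [← coeff_sum, sum_word_eq_sum_X_pow, coeff_sum_X_pow_of_fintype, coeff_smul, coeff_hsymm,
    show (b.sum fun _ m => m) = b.degree from rfl]
  split_ifs with hdeg
  · rw [nsmul_eq_mul, nsmul_one, ← Nat.cast_mul,
      Finsupp.multinomial_eq_of_support_subset (Finset.subset_univ _), Nat.multinomial_spec,
      ← Finsupp.degree_eq_sum, hdeg]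
  · simp only [Nat.cast_zero, smul_zero]

end Words

section CycleIndex

variable {ι : Type*} [Fintype ι] [DecidableEq ι] (σ : Equiv.Perm ι)

/-- The cycle of `σ` through a point; the fixed points, which Mathlib's cycle factorization omits,
form the second summand. -/
def cycleThrough (x : ι) : σ.cycleFactorsFinset ⊕ Function.fixedPoints σ :=
  if h : σ x = x then Sum.inr ⟨x, h⟩
  else Sum.inl ⟨σ.cycleOf x,
    Equiv.Perm.cycleOf_mem_cycleFactorsFinset_iff.2 (Equiv.Perm.mem_support.2 h)⟩

variable {σ}

theorem cycleThrough_eq_inl {x : ι} {c : σ.cycleFactorsFinset} :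
    cycleThrough σ x = Sum.inl c ↔ x ∈ c.1.support := by
  unfold cycleThrough
  split_ifs with h
  · refine iff_of_false id fun hx => ?_
    exact Equiv.Perm.mem_support.1 (Equiv.Perm.mem_cycleFactorsFinset_support_le c.2 hx) h
  · rw [Sum.inl.injEq, Subtype.ext_iff]
    refine ⟨fun hc => ?_, fun hx => (Equiv.Perm.cycle_is_cycleOf hx c.2).symm⟩
    exact hc ▸ Equiv.Perm.mem_support_cycleOf_iff.2 ⟨.refl _ _, Equiv.Perm.mem_support.2 h⟩

theorem cycleThrough_eq_inr {x : ι} {c : Function.fixedPoints σ} :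
    cycleThrough σ x = Sum.inr c ↔ x = c := by
  unfold cycleThrough
  split_ifs with h
  · rw [Sum.inr.injEq, Subtype.ext_iff]
  · exact iff_of_false id fun hx => h (hx ▸ c.2)

theorem cycleThrough_surjective : Function.Surjective (cycleThrough σ) := by
  rintro (c | c)
  · obtain ⟨x, hx⟩ := (Equiv.Perm.mem_cycleFactorsFinset_iff.1 c.2).1.nonempty_support
    exact ⟨x, cycleThrough_eq_inl.2 hx⟩
  · exact ⟨c, cycleThrough_eq_inr.2 rfl⟩

theorem cycleThrough_eq_iff_sameCycle {x y : ι} :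
    cycleThrough σ x = cycleThrough σ y ↔ σ.SameCycle x y := by
  rw [eq_comm]
  by_cases hx : σ x = x
  · rw [(cycleThrough_eq_inr (c := ⟨x, hx⟩)).2 rfl, cycleThrough_eq_inr]
    exact ⟨fun h => h ▸ .refl _ _, fun h => (h.eq_of_left hx).symm⟩
  · have hcycle : cycleThrough σ x = Sum.inl ⟨σ.cycleOf x, _⟩ := dif_neg hx
    rw [hcycle, cycleThrough_eq_inl, Equiv.Perm.mem_support_cycleOf_iff]
    exact and_iff_left (Equiv.Perm.mem_support.2 hx)

theorem comp_eq_self_iff_factorsThrough_cycleThrough {κ : Type*} {g : ι → κ} :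
    g ∘ σ = g ↔ g.FactorsThrough (cycleThrough σ) := by
  refine ⟨fun h x y hxy => ?_, fun h => funext fun x => h ?_⟩
  · obtain ⟨n, rfl⟩ := (cycleThrough_eq_iff_sameCycle.1 hxy).exists_nat_pow_eq
    rw [Equiv.Perm.coe_pow]
    exact (congrFun (Function.iterate_invariant h n) x).symm
  · exact cycleThrough_eq_iff_sameCycle.2 (Equiv.Perm.sameCycle_apply_left.2 (.refl _ _))

theorem psumPart_partition_eq_sum_word {κ R : Type*} [Fintype κ] [DecidableEq κ] [CommSemiring R] :
    psumPart κ R σ.partition = ∑ g : ι → κ with g ∘ σ = g, ∏ i, X (g i) := by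
  classical
  simp only [comp_eq_self_iff_factorsThrough_cycleThrough]
  rw [← prod_psum_card_fiber cycleThrough_surjective, Fintype.prod_sum_type, psumPart,
    Equiv.Perm.parts_partition, Multiset.map_add, Multiset.prod_add]
  congr 1
  · simp only [cycleThrough_eq_inl, Fintype.card_coe]
    rw [Finset.prod_coe_sort σ.cycleFactorsFinset fun c => psum κ R c.support.card,
      Equiv.Perm.cycleType_def, Multiset.map_map]
    rfl
  · simp only [cycleThrough_eq_inr, Fintype.card_unique, Finset.prod_const, Finset.card_univ,
      Equiv.Perm.card_fixedPoints, Equiv.Perm.sum_cycleType, Multiset.map_replicate,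
      Multiset.prod_replicate]

end CycleIndex

section YoungSubgroup

variable {ι κ T R : Type*}

theorem prodMk_comp_eq_self_iff {F : ι → T} {g : ι → κ} {σ : ι → ι} :
    ((fun x => (F x, g x)) ∘ σ = fun x => (F x, g x)) ↔ F ∘ σ = F ∧ g ∘ σ = g := by
  simp only [funext_iff, Function.comp_apply, Prod.mk.injEq, forall_and]

variable [Fintype ι] [DecidableEq ι] [Fintype κ] [DecidableEq κ]
  [Fintype T] [DecidableEq T] [CommSemiring R]

theorem card_stabilizer_prodMk (F : ι → T) (g : ι → κ) :
    Fintype.card {σ : Equiv.Perm ι // F ∘ σ = F ∧ g ∘ σ = g} =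
      ∏ t, ∏ c, (Fintype.card {x : {x // F x = t} // g x = c}).factorial := by
  simp only [← prodMk_comp_eq_self_iff]
  rw [DomMulAct.stabilizer_card, Fintype.prod_prod_type]
  refine Finset.prod_congr rfl fun t _ => Finset.prod_congr rfl fun c _ => congrArg _ ?_
  refine Fintype.card_congr ?_
  exact (Equiv.subtypeEquivRight fun x => Prod.mk_inj).trans
    (Equiv.subtypeSubtypeEquivSubtypeInter _ fun x => g x = c).symm

theorem sum_stabilizer_psumPart (F : ι → T) :
    ∑ σ ∈ {σ : Equiv.Perm ι | F ∘ σ = F}, psumPart κ R σ.partition =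
      ∏ t, (Fintype.card {x // F x = t}).factorial •
        hsymm κ R (Fintype.card {x // F x = t}) := by
  calc ∑ σ ∈ {σ : Equiv.Perm ι | F ∘ σ = F}, psumPart κ R σ.partition
      = ∑ g : ι → κ, ∑ σ ∈ {σ : Equiv.Perm ι | F ∘ σ = F ∧ g ∘ σ = g}, ∏ i, X (g i) := by
        simp only [psumPart_partition_eq_sum_word]
        exact Finset.sum_comm' fun σ g => by simp
    _ = ∑ g : ι → κ, ∏ t, (∏ c, (Fintype.card {x : {x // F x = t} // g x = c}).factorial) •
          ∏ x : {x // F x = t}, X (g x) := by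
        refine Finset.sum_congr rfl fun g _ => ?_
        rw [Finset.sum_const, ← Fintype.card_subtype, card_stabilizer_prodMk, Finset.prod_smul,
          Fintype.prod_fiberwise F fun i => X (g i)]
    _ = ∑ g : ∀ t, {x // F x = t} → κ,
          ∏ t, (∏ c, (Fintype.card {x // g t x = c}).factorial) • ∏ x, X (g t x) :=
        Fintype.sum_equiv (((Equiv.sigmaFiberEquiv F).symm.arrowCongr (Equiv.refl κ)).trans
          (Equiv.piCurry fun _ _ => κ)) _ _ fun g => rfl
    _ = _ := by
        rw [← Fintype.prod_sum fun t (g : {x // F x = t} → κ) =>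
          (∏ c, (Fintype.card {x // g x = c}).factorial) • ∏ x, X (R := R) (g x)]
        exact Finset.prod_congr rfl fun t _ => sum_prod_factorial_smul_word

end YoungSubgroup

section Frobenius

theorem permPowSum_eq_psumPart (d : ℕ) (σ : Equiv.Perm (Fin d)) :
    permPowSum d σ = psumPart (Fin d) ℤ σ.partition := by
  rw [psumPart, Equiv.Perm.parts_partition, Multiset.map_add, Multiset.prod_add,
    Multiset.map_replicate, Multiset.prod_replicate, ← Equiv.Perm.sum_cycleType, Fintype.card_fin]
  rfl

/-- The contribution of the word `g` to Frobenius' formula: the coefficient of `x^{λ+δ}` in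
`a_δ · ∏ i, x_{g i}`. -/
noncomputable def wordCoeff (d : ℕ) (lam : ℕ → ℕ) (g : Fin d → Fin d) : ℤ :=
  coeff (staircase d lam) (vandermonde d * ∏ i, X (g i))

theorem chi_eq_sum_word (d : ℕ) (lam : ℕ → ℕ) (σ : Equiv.Perm (Fin d)) :
    chi d lam σ = ∑ g : Fin d → Fin d with g ∘ σ = g, wordCoeff d lam g := by
  rw [chi, permPowSum_eq_psumPart, psumPart_partition_eq_sum_word, Finset.mul_sum, coeff_sum]
  rfl

theorem vandermonde_eq_prod_Ioi (d : ℕ) :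
    vandermonde d = ∏ i, ∏ j ∈ Finset.Ioi i, (X i - X j) := by
  rw [vandermonde, Finset.prod_filter, Fintype.prod_prod_type]
  refine Finset.prod_congr rfl fun i _ => ?_
  rw [← Finset.prod_filter]
  exact Finset.prod_congr (Finset.filter_lt_eq_Ioi) fun _ _ => rfl

theorem rename_swap_vandermonde {d : ℕ} {i j : Fin d} (hij : i ≠ j) :
    rename (Equiv.swap i j) (vandermonde d) = -vandermonde d := by
  simp only [vandermonde_eq_prod_Ioi, map_prod, map_sub, rename_X]
  rw [Equiv.Perm.prod_Ioi_comp_eq_sign_mul_prod (f := fun i j => X i - X j) _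
    fun _ _ => (neg_sub _ _).symm, Equiv.Perm.sign_swap hij]
  simp only [Units.val_neg, Units.val_one, Int.cast_neg, Int.cast_one, neg_one_mul]

theorem degreeOf_zero_vandermonde_le (k : ℕ) : degreeOf 0 (vandermonde (k + 1)) ≤ k := by
  have hfactor (i j : Fin (k + 1)) (hij : i < j) :
      degreeOf 0 (X i - X j : MvPolynomial _ ℤ) ≤ if i = 0 then 1 else 0 := by
    refine (degreeOf_sub_le 0 _ _).trans ?_
    simp only [degreeOf_X, eq_comm (a := (0 : Fin (k + 1))), if_neg (Fin.ne_zero_of_lt hij),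
      max_eq_left (Nat.zero_le _), le_refl]
  calc degreeOf 0 (vandermonde (k + 1))
      ≤ ∑ i, ∑ j ∈ Finset.Ioi i, degreeOf 0 (X i - X j : MvPolynomial (Fin (k + 1)) ℤ) := by
        rw [vandermonde_eq_prod_Ioi]
        exact (degreeOf_prod_le _ _ _).trans (Finset.sum_le_sum fun _ _ => degreeOf_prod_le _ _ _)
    _ ≤ ∑ i : Fin (k + 1), ∑ j ∈ Finset.Ioi i, if i = 0 then 1 else 0 :=
        Finset.sum_le_sum fun i _ => Finset.sum_le_sum fun j hj =>
          hfactor i j (Finset.mem_Ioi.1 hj)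
    _ = k := by
        simp only [Finset.sum_const, smul_eq_mul, mul_ite, mul_one, mul_zero,
          Finset.sum_ite_eq', Finset.mem_univ, if_true, Fin.card_Ioi, Fin.val_zero]
        rfl

theorem le_card_fiber_zero_of_wordCoeff_ne_zero {k : ℕ} {lam : ℕ → ℕ}
    {g : Fin (k + 1) → Fin (k + 1)} (h : wordCoeff (k + 1) lam g ≠ 0) :
    lam 0 ≤ Fintype.card {i // g i = 0} := by
  rw [wordCoeff, prod_X_eq_monomial_wordContent, coeff_mul_monomial', mul_one,
    ite_ne_right_iff] at h
  have hdeg := degreeOf_le_iff.1 (degreeOf_zero_vandermonde_le k) _ (mem_support_iff.2 h.2)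
  have hstair : staircase (k + 1) lam 0 = lam 0 + k := rfl
  rw [Finsupp.tsub_apply, hstair, wordContent_apply] at hdeg
  omega

end Frobenius

section Triangle

theorem antitone_staircase {d : ℕ} {nu : ℕ → ℕ} (hnu : Antitone nu) :
    Antitone (staircase d nu) := fun _ _ hij =>
  add_le_add (hnu hij) (Nat.sub_le_sub_left hij _)

theorem sum_stabilizer_chi {T : Type*} [Fintype T] [DecidableEq T] {d : ℕ} (nu : ℕ → ℕ)
    (F : Fin d → T) :
    ∑ σ ∈ {σ : Equiv.Perm (Fin d) | F ∘ σ = F}, chi d nu σ =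
      coeff (staircase d nu) (vandermonde d * ∏ t, (Fintype.card {x // F x = t}).factorial •
        hsymm (Fin d) ℤ (Fintype.card {x // F x = t})) := by
  simp only [chi, permPowSum_eq_psumPart]
  rw [← coeff_sum, ← Finset.mul_sum, sum_stabilizer_psumPart]

-- Pieri's rule: a block of size `K` contributes a factor `h_K` to the sum over a Young subgroup,
-- and multiplication by `h_K` only produces Schur functions `s_ν` with `ν₁ ≥ K`.
theorem sum_stabilizer_chi_eq_zero {T : Type*} [Finite T] [DecidableEq T] {k : ℕ}
    {nu : ℕ → ℕ} (hnu : Antitone nu) {F : Fin (k + 1) → T} {t : T}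
    (ht : nu 0 < Fintype.card {x // F x = t}) :
    ∑ σ ∈ {σ : Equiv.Perm (Fin (k + 1)) | F ∘ σ = F}, chi (k + 1) nu σ = 0 := by
  cases nonempty_fintype T
  let H (s : T) : MvPolynomial (Fin (k + 1)) ℤ :=
    (Fintype.card {x // F x = s}).factorial • hsymm _ ℤ (Fintype.card {x // F x = s})
  have hsymmetric : (∏ s ∈ Finset.univ.erase t, H s).IsSymmetric :=
    Subalgebra.prod_mem (symmetricSubalgebra _ ℤ) fun s _ =>
      Subalgebra.nsmul_mem _ (hsymm_isSymmetric _ ℤ _) _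
  rw [sum_stabilizer_chi, ← Finset.mul_prod_erase _ H (Finset.mem_univ t), smul_mul_assoc,
    mul_smul_comm, mul_left_comm, coeff_smul, coeff_hsymm_mul_eq_zero_of_alternating
      (antitone_staircase hnu), smul_zero]
  · change nu 0 + k < _
    omega
  · intro i
    rw [map_mul, hsymmetric, rename_swap_vandermonde i.castSucc_lt_succ.ne, neg_mul]

theorem sum_chi_mul_chi_mul_chi (d : ℕ) (lam mu nu : ℕ → ℕ) :
    ∑ σ, chi d lam σ * chi d mu σ * chi d nu σ =
      ∑ f, ∑ g, wordCoeff d lam f * wordCoeff d mu g *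
        ∑ σ ∈ {σ : Equiv.Perm (Fin d) | (fun x => (f x, g x)) ∘ σ = fun x => (f x, g x)},
          chi d nu σ := by
  simp only [prodMk_comp_eq_self_iff, chi_eq_sum_word d lam, chi_eq_sum_word d mu,
    Finset.sum_filter, Finset.sum_mul_sum]
  simp only [Finset.sum_mul, Finset.mul_sum]
  rw [Finset.sum_comm]
  refine Finset.sum_congr rfl fun f _ => ?_
  rw [Finset.sum_comm]
  refine Finset.sum_congr rfl fun g _ => Finset.sum_congr rfl fun σ _ => ?_
  simp only [ite_and, ite_mul, mul_ite, zero_mul, mul_zero]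
  split_ifs <;> rfl

theorem card_fiber_add_card_fiber_le {ι S T : Type*} [Fintype ι] [DecidableEq S] [DecidableEq T]
    (f : ι → S) (g : ι → T) (s : S) (t : T) :
    Fintype.card {x // f x = s} + Fintype.card {x // g x = t} ≤
      Fintype.card ι + Fintype.card {x // (f x, g x) = (s, t)} := by
  classical
  simp only [Fintype.card_subtype, Prod.mk.injEq, Finset.filter_and]
  rw [← Finset.card_union_add_card_inter]
  exact Nat.add_le_add_right (Finset.card_le_univ _) _

theorem gKron_eq_zero_of_lt {k : ℕ} {lam mu nu : ℕ → ℕ} (hnu : Antitone nu)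
    (h : (k + 1) + nu 0 < lam 0 + mu 0) : gKron (k + 1) lam mu nu = 0 := by
  rw [gKron, sum_chi_mul_chi_mul_chi, Finset.sum_eq_zero, Int.zero_ediv]
  refine fun f _ => Finset.sum_eq_zero fun g _ => ?_
  by_contra hne
  have hword := left_ne_zero_of_mul hne
  have hf := le_card_fiber_zero_of_wordCoeff_ne_zero (left_ne_zero_of_mul hword)
  have hg := le_card_fiber_zero_of_wordCoeff_ne_zero (right_ne_zero_of_mul hword)
  have hfg := card_fiber_add_card_fiber_le f g 0 0
  rw [Fintype.card_fin] at hfg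
  refine right_ne_zero_of_mul hne (sum_stabilizer_chi_eq_zero hnu (t := (0, 0)) ?_)
  omega

theorem gKron_rotate (d : ℕ) (lam mu nu : ℕ → ℕ) : gKron d lam mu nu = gKron d mu nu lam := by
  simp only [gKron, mul_comm, mul_left_comm]

theorem apply_zero_le_psize (f : ℕ →₀ ℕ) : f 0 ≤ psize f := Finsupp.le_degree 0 f

theorem antitone_pad {n : ℕ →₀ ℕ} (hn : IsPtn n) {d : ℕ} (hd : 2 * psize n ≤ d) :
    Antitone (pad n d) := by
  refine antitone_nat_of_succ_le fun i => ?_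
  cases i with
  | zero =>
    have hzero := apply_zero_le_psize n
    change n 0 ≤ d - psize n
    omega
  | succ i => exact hn i (i + 1) i.le_succ

theorem gKron_pad_eq_zero {l m n : ℕ →₀ ℕ} (hn : IsPtn n) (h : psize l + psize m < psize n)
    {d : ℕ} (hd : 2 * psize n ≤ d) :
    gKron d (pad l d) (pad m d) (pad n d) = 0 := by
  obtain ⟨k, rfl⟩ : ∃ k, d = k + 1 := ⟨d - 1, by omega⟩
  refine gKron_eq_zero_of_lt (antitone_pad hn hd) ?_
  simp only [pad, if_true]
  omega

end Triangle

/-- Murnaghan–Littlewood inequalities: if any of `|ν| ≤ |λ|+|μ|`, `|μ| ≤ |λ|+|ν|`,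
`|λ| ≤ |μ|+|ν|` fails, then `g_{λ[d],μ[d]}^{ν[d]} = 0` for all sufficiently large `d`,
i.e. the reduced Kronecker coefficient `ḡ_{λμ}^ν` vanishes. -/
theorem reduced_kron_triangle (l m n : ℕ →₀ ℕ) (hl : IsPtn l) (hm : IsPtn m)
    (hn : IsPtn n)
    (h : ¬ (psize n ≤ psize l + psize m ∧ psize m ≤ psize l + psize n ∧
      psize l ≤ psize m + psize n)) :
    ∃ D : ℕ, ∀ d : ℕ, D ≤ d → gKron d (pad l d) (pad m d) (pad n d) = 0 := by
  refine ⟨2 * (psize l + psize m + psize n), fun d hd => ?_⟩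
  obtain hlt | hlt | hlt : psize l + psize m < psize n ∨ psize n + psize l < psize m ∨
      psize m + psize n < psize l := by omega
  · exact gKron_pad_eq_zero hn hlt (by omega)
  · rw [gKron_rotate, gKron_rotate]
    exact gKron_pad_eq_zero hm hlt (by omega)
  · rw [gKron_rotate]
    exact gKron_pad_eq_zero hl hlt (by omega)
end

section
/- For partitions λ, μ of sizes m and n with |ν| = m + n, and for all d large enough, the Kronecker coefficient g_{λ[d],μ[d]}^{ν[d]} equals the Littlewood–Richardson coefficient c_{λμ}^ν (Murnaghan–Littlewood theorem in stable form): ḡ_{λμ}^ν = c_{λμ}^ν whenever |ν| = |λ| + |μ|. -/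
open MvPolynomial

/-- The complete homogeneous symmetric polynomial `h_r` in `n` variables. -/
noncomputable def hsym (n r : ℕ) : MvPolynomial (Fin n) ℤ :=
  ∑ e ∈ Finset.finsuppAntidiag (Finset.univ : Finset (Fin n)) r, monomial e 1

/-- `h_z` for an integer index, with `h_z = 0` for `z < 0`. -/
noncomputable def hsymInt (n : ℕ) (z : ℤ) : MvPolynomial (Fin n) ℤ :=
  if z < 0 then 0 else hsym n z.toNat

/-- The Schur polynomial `s_λ` in `n` variables, via the Jacobi–Trudi determinant
`s_λ = det (h_{λ_i - i + j})`. -/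
noncomputable def schur (n : ℕ) (lam : ℕ → ℕ) : MvPolynomial (Fin n) ℤ :=
  Matrix.det (Matrix.of fun i j : Fin n => hsymInt n ((lam i.val : ℤ) - (i.val : ℤ) + (j.val : ℤ)))

/-- The Littlewood–Richardson coefficient `c_{κλ}^ν`, the multiplicity of `s_ν` in
`s_κ s_λ`: since `a_δ · s_κ s_λ = ∑_ν c_{κλ}^ν a_{ν+δ}`, it is the coefficient of
`x^{ν+δ}` in `a_δ · s_κ · s_λ`. -/
noncomputable def lrCoeff (n : ℕ) (kappa lam nu : ℕ → ℕ) : ℤ :=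
  coeff (staircase n nu) (vandermonde n * schur n kappa * schur n lam)

/-!
Write `x`, `y`, `z` for the variables of the Frobenius formulas of `λ[d]`, `μ[d]`, `ν[d]`, each
alphabet dehomogenized by setting its first variable to `1`. A product of three characters at `σ` is
then a coefficient of `∏ (1 - x_i) ∏ (1 - y_j) ∏ (1 - z_k)` times the power sum of cycle type `σ` in
the cells, the products of one letter from each of `{1, x_i}`, `{1, y_j}`, `{1, z_k}`. Averaging
over `σ` replaces the power sum by the complete homogeneous polynomial `h_d` in the cells; as one
cell is `1` and only boundedly many powers of the others matter, for large `d` this is the product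
of the geometric series `1 / (1 - u)` over the cells `u ≠ 1`. The factors `1 - x_i`, `1 - y_j`,
`1 - z_k` cancel the cells with a single variable. In the remaining cells the degree in `z` is at
most the joint degree in `x` and `y`, with equality only for `x_i z_k` and `y_j z_k`; since
`|ν| = |λ| + |μ|`, only these contribute. Their geometric series form two Cauchy kernels, in which
the coefficients of `λ` and `μ` are `s_λ(z)` and `s_μ(z)`, so the average is the coefficient of
`s_ν` in `s_λ s_μ`.
-/

namespace MurnaghanLittlewood

open Equiv Finset

theorem prod_univ_X_pow {ι R : Type*} [Fintype ι] [CommSemiring R] (k : ι → ℕ) :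
    ∏ i, (X i : MvPolynomial ι R) ^ k i = monomial (Finsupp.equivFunOnFinite.symm k) 1 := by
  simp [monomial_eq, Finsupp.prod_fintype]

section CyclePowSum

variable {α ι κ R S : Type*} [Fintype α]

/-- The number of times that `f` takes each value. -/
def content [DecidableEq ι] (f : α → ι) (i : ι) : ℕ :=
  #{a | f a = i}

theorem prod_comp_eq_prod_pow_content [Fintype κ] [DecidableEq κ] [CommMonoid R] (g : α → κ)
    (u : κ → R) : ∏ a, u (g a) = ∏ k, u k ^ content g k := by
  simp only [content, ← prod_const, prod_fiberwise']

theorem sum_content [Fintype ι] [DecidableEq ι] (f : α → ι) : ∑ i, content f i = Fintype.card α :=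
  (card_eq_sum_card_fiberwise fun _ _ => mem_coe.2 (mem_univ _)).symm

variable [DecidableEq α]

/-- The product of `p r` over the lengths `r` of all cycles of `σ`, where a fixed point is a cycle
of length `1`; for power sums `p` this is the power sum indexed by the cycle type of `σ`. -/
def cyclePowSum [CommMonoid R] (σ : Perm α) (p : ℕ → R) : R :=
  (σ.partition.parts.map p).prod

theorem cyclePowSum_congr [CommMonoid R] (σ : Perm α) {p q : ℕ → R} (h : ∀ r, 0 < r → p r = q r) :
    cyclePowSum σ p = cyclePowSum σ q :=
  congrArg Multiset.prod (Multiset.map_congr rfl fun r hr => h r (σ.partition.parts_pos hr))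

theorem map_cyclePowSum [CommMonoid R] [CommMonoid S] {F : Type*} [FunLike F R S]
    [MonoidHomClass F R S] (φ : F) (σ : Perm α) (p : ℕ → R) :
    φ (cyclePowSum σ p) = cyclePowSum σ (fun r => φ (p r)) := by
  simp only [cyclePowSum, map_multiset_prod, Multiset.map_map, Function.comp_def]

theorem cyclePowSum_eq [CommMonoid R] (σ : Perm α) (p : ℕ → R) :
    cyclePowSum σ p =
      (σ.cycleType.map p).prod * p 1 ^ (Fintype.card α - σ.cycleType.sum) := by
  rw [cyclePowSum, Perm.parts_partition, Multiset.map_add, Multiset.prod_add,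
    Multiset.map_replicate, Multiset.prod_replicate, Perm.sum_cycleType]

theorem permPowSum_eq_cyclePowSum (d : ℕ) (σ : Perm (Fin d)) :
    permPowSum d σ = cyclePowSum σ (powSum d) := by
  rw [cyclePowSum_eq, permPowSum, Fintype.card_fin]

/-- The cycle of `σ` through a point, where the cycles are indexed by the cyclic factors of `σ` and
its fixed points. -/
def cycleClass (σ : Perm α) (a : α) : σ.cycleFactorsFinset ⊕ {b // σ b = b} :=
  if h : σ a = a then .inr ⟨a, h⟩
  else .inl ⟨σ.cycleOf a, Perm.cycleOf_mem_cycleFactorsFinset_iff.2 (Perm.mem_support.2 h)⟩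

theorem cycleClass_eq_inl_iff {σ : Perm α} {a : α} {c : σ.cycleFactorsFinset} :
    cycleClass σ a = .inl c ↔ a ∈ c.1.support := by
  rw [cycleClass]
  split_ifs with h
  · simpa only [reduceCtorEq, false_iff] using fun hc =>
      Perm.mem_support.1 (Perm.mem_cycleFactorsFinset_support_le c.2 hc) h
  · rw [Sum.inl.injEq, Subtype.ext_iff]
    refine ⟨fun hc => ?_, fun hc => (Perm.cycle_is_cycleOf hc c.2).symm⟩
    rw [← hc, Perm.mem_support_cycleOf_iff]
    exact ⟨.refl _ _, Perm.mem_support.2 h⟩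

theorem cycleClass_eq_inr_iff {σ : Perm α} {a : α} {b : {b // σ b = b}} :
    cycleClass σ a = .inr b ↔ a = b := by
  rw [cycleClass]
  split_ifs with h
  · rw [Sum.inr.injEq, Subtype.ext_iff]
  · simpa only [reduceCtorEq, false_iff] using fun hc => h (by rw [hc, b.2])

theorem cycleClass_surjective (σ : Perm α) : Function.Surjective (cycleClass σ) := by
  rintro (c | b)
  · obtain ⟨a, ha⟩ := (Perm.mem_cycleFactorsFinset_iff.1 c.2).1.nonempty_support
    exact ⟨a, cycleClass_eq_inl_iff.2 ha⟩
  · exact ⟨b, cycleClass_eq_inr_iff.2 rfl⟩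

theorem cycleClass_eq_cycleClass_iff {σ : Perm α} {a b : α} :
    cycleClass σ a = cycleClass σ b ↔ σ.SameCycle b a := by
  by_cases h : σ b = b
  · rw [cycleClass.eq_1 σ b, dif_pos h, cycleClass_eq_inr_iff]
    exact ⟨fun hab => hab ▸ .refl _ _, fun hab => (hab.eq_of_left h).symm⟩
  · rw [cycleClass.eq_1 σ b, dif_neg h, cycleClass_eq_inl_iff, Perm.mem_support_cycleOf_iff]
    exact and_iff_left (Perm.mem_support.2 h)

theorem comp_perm_eq_self_iff {σ : Perm α} {f : α → ι} :
    f ∘ σ = f ↔ f.FactorsThrough (cycleClass σ) := by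
  refine ⟨fun hf a b hab => ?_, fun hf => funext fun a => hf ?_⟩
  · obtain ⟨k, -, rfl⟩ := (cycleClass_eq_cycleClass_iff.1 hab).exists_pow_eq'
    have := (show Function.Semiconj f σ id from congrFun hf).iterate_right k b
    simpa [Perm.iterate_eq_pow] using this
  · exact cycleClass_eq_cycleClass_iff.2 (Perm.sameCycle_apply_right.2 (.refl _ _))

theorem content_cycleClass_inl {σ : Perm α} (c : σ.cycleFactorsFinset) :
    content (cycleClass σ) (.inl c) = #c.1.support := by
  simp only [content, cycleClass_eq_inl_iff, filter_univ_mem]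

theorem content_cycleClass_inr {σ : Perm α} (b : {b // σ b = b}) :
    content (cycleClass σ) (.inr b) = 1 := by
  simp only [content, cycleClass_eq_inr_iff, filter_eq', mem_univ, if_true, card_singleton]

theorem cyclePowSum_eq_prod_cycleClass [CommMonoid R] (σ : Perm α) (p : ℕ → R) :
    cyclePowSum σ p = ∏ k, p (content (cycleClass σ) k) := by
  simp only [Fintype.prod_sum_type, content_cycleClass_inl, content_cycleClass_inr, cyclePowSum_eq,
    prod_const]
  congr 1
  · rw [Perm.cycleType_def, Multiset.map_map, Finset.prod_coe_sort _ fun c : Perm α => p #c.support]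
    rfl
  · rw [Perm.sum_cycleType, card_univ, Fintype.card_subtype, ← card_compl]
    congr 2
    ext a
    simp

theorem sum_comp_perm_eq_self [Fintype ι] [DecidableEq ι] [CommSemiring R] (σ : Perm α)
    (u : ι → R) :
    ∑ f : α → ι with f ∘ σ = f, ∏ a, u (f a) = cyclePowSum σ (fun r => ∑ i, u i ^ r) := by
  have hsurj := cycleClass_surjective σ
  calc ∑ f : α → ι with f ∘ σ = f, ∏ a, u (f a)
      = ∑ g : σ.cycleFactorsFinset ⊕ {b // σ b = b} → ι, ∏ a, u (g (cycleClass σ a)) := by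
        refine (sum_of_injOn (· ∘ cycleClass σ) hsurj.injective_comp_right.injOn
          (fun g _ => ?_) (fun f hf hne => ?_) fun _ _ => rfl).symm
        · rw [mem_coe, mem_filter_univ, comp_perm_eq_self_iff]
          exact fun a b hab => congrArg g hab
        · rw [mem_filter_univ, comp_perm_eq_self_iff] at hf
          exact absurd ⟨f ∘ Function.surjInv hsurj, mem_coe.2 (mem_univ _),
            funext fun a => hf (Function.surjInv_eq hsurj _)⟩ hne
    _ = ∏ k, ∑ i, u i ^ content (cycleClass σ) k := by
        rw [prod_univ_sum, Fintype.piFinset_univ]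
        exact sum_congr rfl fun g _ =>
          prod_comp_eq_prod_pow_content (cycleClass σ) fun k => u (g k)
    _ = cyclePowSum σ (fun r => ∑ i, u i ^ r) :=
        (cyclePowSum_eq_prod_cycleClass σ fun r => ∑ i, u i ^ r).symm

/-- The complete homogeneous symmetric polynomial of degree `d` in the family `u`. -/
def complete [Fintype ι] [DecidableEq ι] [CommSemiring R] (d : ℕ) (u : ι → R) : R :=
  ∑ e ∈ piAntidiag univ d, ∏ i, u i ^ e i

theorem card_comp_perm_eq_self [Fintype ι] [DecidableEq ι] (f : α → ι) :
    #{σ : Perm α | f ∘ σ = f} = ∏ i, (content f i).factorial := by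
  simpa only [Fintype.card_subtype, content] using DomMulAct.stabilizer_card f

theorem card_content_eq [Fintype ι] [DecidableEq ι] {e : ι → ℕ}
    (he : ∑ i, e i = Fintype.card α) :
    #{f : α → ι | content f = e} = Nat.multinomial univ e := by
  have hfun : (∑ i, (X i : MvPolynomial ι ℕ)) ^ Fintype.card α =
      ∑ f : α → ι, ∏ i, X i ^ content f i := by
    rw [← card_univ, ← prod_const, prod_univ_sum, Fintype.piFinset_univ]
    exact sum_congr rfl fun f _ => prod_comp_eq_prod_pow_content f X
  have hmulti := hfun.symm.trans (sum_pow_eq_sum_piAntidiag univ X _)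
  replace hmulti := congrArg (coeff (Finsupp.equivFunOnFinite.symm e)) hmulti
  simpa only [prod_univ_X_pow, coeff_sum, coeff_monomial, EmbeddingLike.apply_eq_iff_eq, sum_boole,
    ← C_eq_coe_nat, coeff_C_mul, mul_ite, mul_one, mul_zero, sum_ite_eq', mem_piAntidiag, he,
    mem_univ, implies_true, and_self, if_true, Nat.cast_id] using hmulti

/-- Burnside's double count of the pairs `(σ, f)` with `f ∘ σ = f`, where `f` has weight
`∏ a, u (f a)`. -/
theorem sum_cyclePowSum_eq_factorial_mul_complete [Fintype ι] [DecidableEq ι] [CommSemiring R]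
    (u : ι → R) :
    ∑ σ : Perm α, cyclePowSum σ (fun r => ∑ i, u i ^ r) =
      (Fintype.card α).factorial * complete (Fintype.card α) u := by
  calc ∑ σ : Perm α, cyclePowSum σ (fun r => ∑ i, u i ^ r)
      = ∑ f : α → ι, #{σ : Perm α | f ∘ σ = f} * ∏ a, u (f a) := by
        simp only [← sum_comp_perm_eq_self, sum_filter]
        rw [sum_comm]
        simp only [← sum_filter, sum_const, nsmul_eq_mul]
    _ = ∑ f : α → ι, (∏ i, (content f i).factorial : ℕ) * ∏ i, u i ^ content f i := by
        simp only [card_comp_perm_eq_self, prod_comp_eq_prod_pow_content _ u]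
    _ = ∑ e ∈ piAntidiag univ (Fintype.card α), ∑ f : α → ι with content f = e,
          (∏ i, (e i).factorial : ℕ) * ∏ i, u i ^ e i := by
        have hmaps (f : α → ι) (_ : f ∈ univ) : content f ∈ piAntidiag univ (Fintype.card α) := by
          simp [sum_content]
        rw [← sum_fiberwise_of_maps_to hmaps]
        refine sum_congr rfl fun e _ => sum_congr rfl fun f hf => ?_
        rw [(mem_filter.1 hf).2]
    _ = _ := by
        rw [complete, mul_sum]
        refine sum_congr rfl fun e he => ?_
        have hcard := (mem_piAntidiag.1 he).1
        rw [sum_const, card_content_eq hcard, nsmul_eq_mul, ← mul_assoc, ← Nat.cast_mul, mul_comm,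
          mul_comm (Nat.multinomial _ _), Nat.multinomial_spec, hcard, mul_comm]

end CyclePowSum

section Vandermonde

variable {N : ℕ}

theorem map_vandermonde {R : Type*} [CommRing R] (φ : MvPolynomial (Fin N) ℤ →+* R) :
    φ (vandermonde N) = ∏ i, ∏ j, if i < j then φ (X i) - φ (X j) else 1 := by
  simp only [vandermonde, map_prod, prod_filter, Fintype.prod_prod_type, apply_ite φ,
    map_sub, map_one]

theorem vandermonde_eq_prod (N : ℕ) :
    vandermonde N = ∏ i, ∏ j, if i < j then X i - X j else 1 :=
  map_vandermonde (RingHom.id _)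

theorem vandermonde_eq_sum_perm (N : ℕ) :
    vandermonde N =
      ∑ w : Perm (Fin N), (Perm.sign w : ℤ) • ∏ i, X i ^ (N - 1 - (w i : ℕ)) := by
  have hprod : vandermonde N = ∏ i, ∏ j ∈ Ioi i, (X i - X j) := by
    simp only [vandermonde_eq_prod, ← prod_filter, filter_lt_eq_Ioi]
  have hdet := Matrix.det_projVandermonde (fun _ => 1) (X : Fin N → MvPolynomial (Fin N) ℤ)
  simp only [one_mul] at hdet
  rw [hprod, ← hdet, ← Matrix.det_transpose, Matrix.det_apply]
  refine sum_congr rfl fun w _ => congrArg _ (prod_congr rfl fun i _ => ?_)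
  simp only [Matrix.transpose_apply, Matrix.projVandermonde, Matrix.rectVandermonde,
    Matrix.of_apply, one_pow, one_mul, Fin.val_rev, Nat.sub_sub, Nat.add_comm]

theorem isHomogeneous_vandermonde (N : ℕ) :
    (vandermonde N).IsHomogeneous (∑ i : Fin N, (N - 1 - (i : ℕ))) := by
  rw [vandermonde_eq_sum_perm]
  refine .sum _ _ _ fun w _ => (homogeneousSubmodule (Fin N) ℤ _).smul_mem _ ?_
  rw [← Equiv.sum_comp w]
  exact .prod _ _ _ fun i _ => isHomogeneous_X_pow _ _

/-- The substitution of `1` for the first variable. -/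
noncomputable def dehomogenize (N : ℕ) :
    MvPolynomial (Fin (N + 1)) ℤ →+* MvPolynomial (Fin N) ℤ :=
  (Polynomial.evalRingHom 1).comp (finSuccEquiv ℤ N : _ →+* _)

theorem dehomogenize_X_zero : dehomogenize N (X 0) = 1 := by
  simp [dehomogenize, finSuccEquiv_X_zero]

theorem dehomogenize_X_succ (i : Fin N) : dehomogenize N (X i.succ) = X i := by
  simp [dehomogenize, finSuccEquiv_X_succ]

theorem coeff_cons_eq_coeff_dehomogenize {F : MvPolynomial (Fin (N + 1)) ℤ} {e : Fin N →₀ ℕ}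
    {k : ℕ} (hF : F.IsHomogeneous (k + ∑ i, e i)) :
    coeff (e.cons k) F = coeff e (dehomogenize N F) := by
  have hcoeff (r : ℕ) (hr : r ≠ k) : coeff (e.cons r) F = 0 := by
    refine hF.coeff_eq_zero ?_
    rw [Finsupp.degree_eq_sum, Fin.sum_univ_succ]
    simpa using hr
  simp only [dehomogenize, RingHom.comp_apply, Polynomial.coe_evalRingHom, RingHom.coe_coe,
    Polynomial.eval_eq_sum, Polynomial.sum_def, one_pow, mul_one, coeff_sum,
    finSuccEquiv_coeff_coeff]
  refine (sum_eq_single k (fun r _ hr => hcoeff r hr) fun hk => ?_).symm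
  rw [← finSuccEquiv_coeff_coeff, Polynomial.notMem_support_iff.1 hk, coeff_zero]

theorem dehomogenize_vandermonde (N : ℕ) :
    dehomogenize N (vandermonde (N + 1)) = vandermonde N * ∏ i, (1 - X i) := by
  rw [map_vandermonde]
  simp [Fin.prod_univ_succ, dehomogenize_X_zero, dehomogenize_X_succ, vandermonde_eq_prod, mul_comm]

/-- The substitution of `0` for the last variable. -/
noncomputable def killLast (N : ℕ) : MvPolynomial (Fin (N + 1)) ℤ →ₐ[ℤ] MvPolynomial (Fin N) ℤ :=
  killCompl (Fin.castSucc_injective N)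

theorem killLast_X_castSucc (i : Fin N) : killLast N (X i.castSucc) = X i := by
  rw [killLast, ← rename_X, killCompl_rename_app]

theorem killLast_X_last : killLast N (X (Fin.last N)) = 0 := by
  rw [killLast, killCompl, aeval_X, dif_neg]
  simp

theorem killLast_vandermonde (N : ℕ) :
    killLast N (vandermonde (N + 1)) = vandermonde N * ∏ i, X i := by
  have := map_vandermonde (killLast N).toRingHom
  simpa [Fin.prod_univ_castSucc, killLast_X_castSucc, killLast_X_last,
    Fin.not_lt.2 (Fin.le_last _), prod_mul_distrib, ← vandermonde_eq_prod] using this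

end Vandermonde

section SchurCoeff

/-- The multiplicity of the Schur polynomial `s_lam` in a symmetric polynomial, read off as the
coefficient of `x^(lam + δ)` after multiplication by the Vandermonde product. -/
noncomputable def schurCoeff (N : ℕ) (lam : ℕ → ℕ) : MvPolynomial (Fin N) ℤ →ₗ[ℤ] ℤ :=
  lcoeff ℤ (staircase N lam) ∘ₗ LinearMap.mulLeft ℤ (vandermonde N)

variable {N : ℕ} {lam : ℕ → ℕ}

theorem schurCoeff_apply (F : MvPolynomial (Fin N) ℤ) :
    schurCoeff N lam F = coeff (staircase N lam) (vandermonde N * F) :=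
  rfl

theorem staircase_apply (i : Fin N) : staircase N lam i = lam i + (N - 1 - i) :=
  rfl

theorem schurCoeff_eq_zero_of_isHomogeneous {F : MvPolynomial (Fin N) ℤ} {d : ℕ}
    (hF : F.IsHomogeneous d) (hd : d ≠ ∑ i : Fin N, lam i) : schurCoeff N lam F = 0 := by
  refine ((isHomogeneous_vandermonde N).mul hF).coeff_eq_zero ?_
  simp only [Finsupp.degree_eq_sum, staircase_apply, sum_add_distrib]
  omega

theorem schurCoeff_X_pow_mul {i : Fin N} {k : ℕ} (hk : lam i + N ≤ k)
    (F : MvPolynomial (Fin N) ℤ) : schurCoeff N lam (X i ^ k * F) = 0 := by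
  rw [schurCoeff_apply, mul_left_comm, X_pow_eq_monomial, coeff_monomial_mul', if_neg]
  intro hle
  have := hle i
  simp only [Finsupp.single_eq_same, staircase_apply] at this
  omega

theorem schurCoeff_succ_eq_killLast (hlam : lam N = 0) (F : MvPolynomial (Fin (N + 1)) ℤ) :
    schurCoeff (N + 1) lam F = schurCoeff N lam (killLast N F) := by
  have hexp : staircase (N + 1) lam =
      (staircase N lam + Finsupp.equivFunOnFinite.symm fun _ => 1).mapDomain Fin.castSucc := by
    ext i
    induction i using Fin.lastCases with
    | last =>
      rw [Finsupp.mapDomain_of_notMem_range _ _ (by simp), staircase_apply]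
      simp [hlam]
    | cast i =>
      rw [Finsupp.mapDomain_apply (Fin.castSucc_injective N), Finsupp.add_apply, staircase_apply,
        staircase_apply]
      simp only [Fin.val_castSucc, Nat.add_sub_cancel, Finsupp.equivFunOnFinite_symm_apply_apply]
      omega
  have hones : ∏ i, (X i : MvPolynomial (Fin N) ℤ) =
      monomial (Finsupp.equivFunOnFinite.symm fun _ => 1) 1 := by
    simp [← prod_univ_X_pow]
  rw [schurCoeff_apply, hexp, ← coeff_killCompl (Fin.castSucc_injective N), ← killLast, map_mul,
    killLast_vandermonde, mul_right_comm, hones, coeff_mul_monomial, mul_one, schurCoeff_apply]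

theorem psize_eq_sum {l : ℕ →₀ ℕ} (hl : ∀ i, N ≤ i → l i = 0) : psize l = ∑ i : Fin N, l i := by
  rw [psize, Finsupp.sum_of_support_subset l (s := range N) _ _ fun _ _ => rfl, sum_range]
  intro i hi
  by_contra hN
  exact Finsupp.mem_support_iff.1 hi (hl i (not_lt.1 fun h => hN (mem_range.2 h)))

theorem schurCoeff_pad_eq_dehomogenize {l : ℕ →₀ ℕ} {d : ℕ} (hl : ∀ i, N ≤ i → l i = 0)
    (hd : psize l ≤ d) {F : MvPolynomial (Fin (N + 1)) ℤ} (hF : F.IsHomogeneous d) :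
    schurCoeff (N + 1) (pad l d) F =
      schurCoeff N l ((∏ i, (1 - X i)) * dehomogenize N F) := by
  have hexp : staircase (N + 1) (pad l d) = (staircase N l).cons (d - psize l + N) := by
    ext i
    induction i using Fin.cases with
    | zero => simp [staircase_apply, pad]
    | succ i =>
      rw [Finsupp.cons_succ, staircase_apply, staircase_apply]
      simp only [pad, Fin.val_succ, Nat.succ_ne_zero, if_false, Nat.add_sub_cancel]
      omega
  rw [schurCoeff_apply, hexp, coeff_cons_eq_coeff_dehomogenize, map_mul, dehomogenize_vandermonde,
    mul_assoc, schurCoeff_apply]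
  convert (isHomogeneous_vandermonde (N + 1)).mul hF using 1
  have hN : ∑ i : Fin (N + 1), (N + 1 - 1 - (i : ℕ)) = N + ∑ i : Fin N, (N - 1 - (i : ℕ)) := by
    simp [Fin.sum_univ_succ, Nat.sub_sub, Nat.add_comm]
  rw [hN]
  simp only [staircase_apply, sum_add_distrib, ← psize_eq_sum hl]
  omega

end SchurCoeff

section Character

variable {N : ℕ}

theorem isHomogeneous_cyclePowSum {α : Type*} [Fintype α] [DecidableEq α]
    {p : ℕ → MvPolynomial (Fin N) ℤ} (hp : ∀ r, (p r).IsHomogeneous r) (σ : Perm α) :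
    (cyclePowSum σ p).IsHomogeneous (Fintype.card α) := by
  rw [cyclePowSum_eq_prod_cycleClass, ← sum_content (cycleClass σ)]
  exact .prod _ _ _ fun k _ => hp _

theorem isHomogeneous_powSum (N r : ℕ) : (powSum N r).IsHomogeneous r :=
  .sum _ _ _ fun i _ => isHomogeneous_X_pow i r

theorem schurCoeff_cyclePowSum_eq_of_le {α : Type*} [Fintype α] [DecidableEq α] {lam : ℕ → ℕ}
    (hlam : ∀ i, N ≤ i → lam i = 0) (σ : Perm α) {k : ℕ} (hk : N ≤ k) :
    schurCoeff k lam (cyclePowSum σ (powSum k)) = schurCoeff N lam (cyclePowSum σ (powSum N)) := by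
  induction k, hk using Nat.le_induction with
  | base => rfl
  | succ k hk ih =>
    have hpow (r : ℕ) (hr : 0 < r) : killLast k (powSum (k + 1) r) = powSum k r := by
      simp [powSum, Fin.sum_univ_castSucc, killLast_X_castSucc, killLast_X_last, hr.ne']
    rw [← ih, schurCoeff_succ_eq_killLast (hlam k hk), ← cyclePowSum_congr σ hpow]
    exact congrArg _ (map_cyclePowSum (killLast k) σ _)

/-- The variables `x_i` together with an additional letter `1`, the dehomogenized first variable. -/
noncomputable def letter : Option (Fin N) → MvPolynomial (Fin N) ℤ :=
  fun o => o.elim 1 X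

/-- Since `l[d]` has at most `N + 1` parts, all but `N + 1` of the `d` variables in Frobenius'
formula can be set to `0`; by homogeneity the first one can then be set to `1`, and its part of the
Vandermonde product becomes `∏ i, (1 - x_i)`. -/
theorem chi_pad_eq_schurCoeff {l : ℕ →₀ ℕ} {d : ℕ} (hl : ∀ i, N ≤ i → l i = 0) (hd : psize l ≤ d)
    (hN : N + 1 ≤ d) (σ : Perm (Fin d)) :
    chi d (pad l d) σ =
      schurCoeff N l ((∏ i, (1 - X i)) * cyclePowSum σ (fun r => ∑ o, letter o ^ r)) := by
  have hpad (i : ℕ) (hi : N + 1 ≤ i) : pad l d i = 0 := by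
    rw [pad, if_neg (by omega), hl _ (by omega)]
  have hpow (r : ℕ) : dehomogenize N (powSum (N + 1) r) = ∑ o, letter o ^ r := by
    simp [powSum, letter, Fin.sum_univ_succ, dehomogenize_X_zero, dehomogenize_X_succ]
  have hhom := isHomogeneous_cyclePowSum (isHomogeneous_powSum (N + 1)) σ
  rw [Fintype.card_fin] at hhom
  calc chi d (pad l d) σ
      = schurCoeff d (pad l d) (cyclePowSum σ (powSum d)) := by
        rw [chi, permPowSum_eq_cyclePowSum, schurCoeff_apply]
    _ = schurCoeff (N + 1) (pad l d) (cyclePowSum σ (powSum (N + 1))) :=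
        schurCoeff_cyclePowSum_eq_of_le hpad σ hN
    _ = _ := by
        rw [schurCoeff_pad_eq_dehomogenize hl hd hhom, map_cyclePowSum]
        simp only [hpow]

end Character

section Truncation

/-- Polynomials in `N` variables in which the `K`-th power of every variable is killed; geometric
series in the variables are finite there, and `schurCoeff` descends to it for large `K`. -/
def Trunc (N K : ℕ) : Type :=
  MvPolynomial (Fin N) ℤ ⧸
    Ideal.span (Set.range fun i : Fin N => (X i : MvPolynomial (Fin N) ℤ) ^ K)

noncomputable instance (N K : ℕ) : CommRing (Trunc N K) :=
  Ideal.Quotient.commRing _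

variable {N K : ℕ} {lam : ℕ → ℕ}

/-- The projection onto the truncated polynomials. -/
noncomputable def trunc (N K : ℕ) : MvPolynomial (Fin N) ℤ →+* Trunc N K :=
  Ideal.Quotient.mk _

theorem trunc_X_pow (i : Fin N) : trunc N K (X i ^ K) = 0 :=
  Ideal.Quotient.eq_zero_iff_mem.2 (Ideal.subset_span ⟨i, rfl⟩)

/-- The functional induced by `schurCoeff` on truncated polynomials. -/
noncomputable def truncCoeff (hlam : ∀ i : Fin N, lam i + N ≤ K) : Trunc N K →ₗ[ℤ] ℤ :=
  (QuotientAddGroup.lift (Submodule.toAddSubgroup _) (schurCoeff N lam).toAddMonoidHom (by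
    intro F hF
    obtain ⟨c, rfl⟩ := Ideal.mem_span_range_iff_exists_fun.1 hF
    refine sum_mem fun i _ => ?_
    rw [mul_comm]
    exact schurCoeff_X_pow_mul (hlam i) _) : Trunc N K →+ ℤ).toIntLinearMap

theorem truncCoeff_trunc (hlam : ∀ i : Fin N, lam i + N ≤ K) (F : MvPolynomial (Fin N) ℤ) :
    truncCoeff hlam (trunc N K F) = schurCoeff N lam F :=
  rfl

end Truncation

section Tensor

open scoped TensorProduct

variable {ι : Type*} {N K : ℕ}

/-- The pure tensor `⨂ F s`, to be thought of as the product of the polynomials `F s` in separate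
sets of variables, one for each `s`. -/
noncomputable def pureTensor (K : ℕ) :
    (ι → MvPolynomial (Fin N) ℤ) →* ⨂[ℤ] _ : ι, Trunc N K :=
  (PiTensorProduct.tprodMonoidHom ℤ).comp ((trunc N K).toMonoidHom.compLeft ι)

theorem pureTensor_apply (F : ι → MvPolynomial (Fin N) ℤ) :
    pureTensor K F = PiTensorProduct.tprod ℤ fun s => trunc N K (F s) :=
  rfl

theorem pureTensor_eq_zero {F : ι → MvPolynomial (Fin N) ℤ} (s : ι)
    (hs : trunc N K (F s) = 0) : pureTensor K F = 0 :=
  (PiTensorProduct.tprod ℤ).map_coord_zero s hs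

variable (K) in
/-- The map that turns a polynomial into a truncated polynomial in the `s`-th set of variables. -/
noncomputable def slot [DecidableEq ι] (s : ι) :
    MvPolynomial (Fin N) ℤ →+* ⨂[ℤ] _ : ι, Trunc N K :=
  (PiTensorProduct.singleAlgHom (R := ℤ) (A := fun _ : ι => Trunc N K) s).toRingHom.comp
    (trunc N K)

theorem pureTensor_mulSingle [DecidableEq ι] (s : ι) (F : MvPolynomial (Fin N) ℤ) :
    pureTensor K (Pi.mulSingle s F) = slot K s F := by
  refine congrArg (PiTensorProduct.tprod ℤ) (funext fun t => ?_)
  rcases eq_or_ne t s with rfl | ht <;> simp [*]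

/-- The product over all `s` of the letters `c s`, the `s`-th one in the `s`-th set of variables. -/
noncomputable def cellVar (K : ℕ) (c : ι → Option (Fin N)) : ⨂[ℤ] _ : ι, Trunc N K :=
  pureTensor K fun s => letter (c s)

theorem cellVar_none : cellVar K (fun _ : ι => (none : Option (Fin N))) = 1 :=
  map_one (pureTensor K)

theorem cellVar_pow_eq_zero {c : ι → Option (Fin N)} (hc : c ≠ fun _ => none) :
    cellVar K c ^ K = 0 := by
  obtain ⟨s, hs⟩ := Function.ne_iff.1 hc
  obtain ⟨i, hi⟩ := Option.ne_none_iff_exists'.1 hs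
  rw [cellVar, ← map_pow]
  refine pureTensor_eq_zero s ?_
  rw [Pi.pow_apply, hi]
  exact trunc_X_pow i

variable [Fintype ι] {lam : ι → ℕ → ℕ}

/-- The functional `⨂ F s ↦ ∏ s, schurCoeff N (lam s) (F s)`. -/
noncomputable def tensorCoeff (hlam : ∀ s, ∀ i : Fin N, lam s i + N ≤ K) :
    (⨂[ℤ] _ : ι, Trunc N K) →ₗ[ℤ] ℤ :=
  PiTensorProduct.lift
    ((MultilinearMap.mkPiAlgebra ℤ ι ℤ).compLinearMap fun s => truncCoeff (hlam s))

theorem tensorCoeff_pureTensor (hlam : ∀ s, ∀ i : Fin N, lam s i + N ≤ K)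
    (F : ι → MvPolynomial (Fin N) ℤ) :
    tensorCoeff hlam (pureTensor K F) = ∏ s, schurCoeff N (lam s) (F s) :=
  (PiTensorProduct.lift.tprod _).trans (by simp [truncCoeff_trunc])

variable [DecidableEq ι]

theorem sum_cellVar_pow (r : ℕ) :
    ∑ c : ι → Option (Fin N), cellVar K c ^ r = pureTensor K fun _ => ∑ o, letter o ^ r := by
  simp only [cellVar, ← map_pow]
  simp only [pureTensor_apply, Pi.pow_apply, map_sum]
  exact ((PiTensorProduct.tprod ℤ).map_sum fun _ o => trunc N K (letter o ^ r)).symm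

theorem prod_chi_pad_eq_tensorCoeff {l : ι → ℕ →₀ ℕ} {d : ℕ}
    (hlam : ∀ s, ∀ i : Fin N, l s i + N ≤ K)
    (hl : ∀ s i, N ≤ i → l s i = 0) (hd : ∀ s, psize (l s) ≤ d) (hN : N + 1 ≤ d)
    (σ : Perm (Fin d)) :
    ∏ s, chi d (pad (l s) d) σ =
      tensorCoeff hlam ((pureTensor K fun _ => ∏ i, (1 - X i)) *
        cyclePowSum σ fun r => ∑ c, cellVar K c ^ r) := by
  have hcycle : (fun _ : ι => cyclePowSum σ fun r => ∑ o : Option (Fin N), letter o ^ r) =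
      cyclePowSum σ fun r _ => ∑ o, letter o ^ r :=
    funext fun s => (map_cyclePowSum (Pi.evalMonoidHom (fun _ : ι => MvPolynomial (Fin N) ℤ) s) σ
      fun r _ => ∑ o, letter o ^ r).symm
  simp_rw [chi_pad_eq_schurCoeff (hl _) (hd _) hN σ, sum_cellVar_pow, ← map_cyclePowSum, ← hcycle,
    ← map_mul, tensorCoeff_pureTensor, Pi.mul_apply]

theorem sum_prod_chi_pad {l : ι → ℕ →₀ ℕ} {d : ℕ} (hlam : ∀ s, ∀ i : Fin N, l s i + N ≤ K)
    (hl : ∀ s i, N ≤ i → l s i = 0) (hd : ∀ s, psize (l s) ≤ d) (hN : N + 1 ≤ d) :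
    ∑ σ : Perm (Fin d), ∏ s, chi d (pad (l s) d) σ =
      d.factorial * tensorCoeff hlam ((pureTensor K fun _ => ∏ i, (1 - X i)) *
        complete d (cellVar K)) := by
  simp_rw [prod_chi_pad_eq_tensorCoeff hlam hl hd hN, ← map_sum, ← mul_sum,
    sum_cyclePowSum_eq_factorial_mul_complete, Fintype.card_fin,
    mul_left_comm _ (d.factorial : ⨂[ℤ] _ : ι, Trunc N K), ← nsmul_eq_mul, map_nsmul]

end Tensor

section Geometric

variable {κ R : Type*} [Fintype κ] [DecidableEq κ]

/-- The exponent vectors supported on `s` with all entries below `K`. -/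
def boundedExps (s : Finset κ) (K : ℕ) : Finset (κ → ℕ) :=
  Fintype.piFinset fun c => if c ∈ s then range K else {0}

theorem mem_boundedExps {s : Finset κ} {K : ℕ} {e : κ → ℕ} :
    e ∈ boundedExps s K ↔ (∀ c ∈ s, e c < K) ∧ ∀ c ∉ s, e c = 0 := by
  simp only [boundedExps, Fintype.mem_piFinset, ← forall_and]
  refine forall_congr' fun c => ?_
  by_cases hc : c ∈ s <;> simp [hc]

theorem prod_geom_sum [CommSemiring R] (s : Finset κ) (K : ℕ) (u : κ → R) :
    ∏ c ∈ s, ∑ k ∈ range K, u c ^ k = ∑ e ∈ boundedExps s K, ∏ c, u c ^ e c := by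
  rw [boundedExps, ← prod_univ_sum (f := fun c k => u c ^ k), ← prod_subset (subset_univ s)]
  · exact prod_congr rfl fun c hc => by rw [if_pos hc]
  · exact fun c _ hc => by rw [if_neg hc, sum_singleton, pow_zero]

theorem sum_le_of_mem_boundedExps {s : Finset κ} {K : ℕ} {e : κ → ℕ} (he : e ∈ boundedExps s K) :
    ∑ c, e c ≤ Fintype.card κ * K := by
  refine sum_le_card_nsmul univ e K fun c _ => ?_
  rw [mem_boundedExps] at he
  by_cases hc : c ∈ s
  · exact (he.1 c hc).le
  · exact (he.2 c hc).trans_le (Nat.zero_le K)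

/-- The entry at `c₀`, on which `f` does not depend, makes up for the difference of the degrees. -/
theorem sum_piAntidiag_eq_sum_boundedExps {M : Type*} [AddCommMonoid M] {f : (κ → ℕ) → M} {c₀ : κ}
    {K d : ℕ} (hupdate : ∀ e a, f (Function.update e c₀ a) = f e)
    (hzero : ∀ e c, c ≠ c₀ → K ≤ e c → f e = 0) (hd : Fintype.card κ * K ≤ d) :
    ∑ e ∈ piAntidiag univ d, f e = ∑ e ∈ boundedExps (univ.erase c₀) K, f e := by
  have hsum (e : κ → ℕ) : e c₀ + ∑ c ∈ univ.erase c₀, e c = ∑ c, e c :=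
    add_sum_erase univ e (mem_univ c₀)
  have hsum_update (e : κ → ℕ) (a : ℕ) :
      ∑ c, Function.update e c₀ a c = a + ∑ c ∈ univ.erase c₀, e c := by
    rw [sum_update_of_mem (mem_univ c₀), sdiff_singleton_eq_erase]
  refine (sum_of_injOn (fun e => Function.update e c₀ (d - ∑ c, e c)) ?_ ?_ ?_ ?_).symm
  · intro e he e' he' h
    rw [mem_coe, mem_boundedExps] at he he'
    funext c
    rcases eq_or_ne c c₀ with rfl | hc
    · rw [he.2 c (notMem_erase c _), he'.2 c (notMem_erase c _)]
    · simpa [hc] using congrFun h c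
  · intro e he
    have hle := (sum_le_of_mem_boundedExps he).trans hd
    have hc₀ : e c₀ = 0 := (mem_boundedExps.1 he).2 c₀ (notMem_erase c₀ _)
    rw [mem_coe, mem_piAntidiag, hsum_update, ← hsum, hc₀]
    rw [← hsum, hc₀] at hle
    exact ⟨by omega, fun c _ => mem_univ c⟩
  · intro e he hne
    by_contra hfe
    refine hne ⟨Function.update e c₀ 0, mem_boundedExps.2 ⟨fun c hc => ?_, fun c hc => ?_⟩, ?_⟩
    · rw [Function.update_of_ne (ne_of_mem_erase hc)]
      by_contra! hK
      exact hfe (hzero e c (ne_of_mem_erase hc) hK)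
    · obtain rfl : c = c₀ := by simpa using hc
      exact Function.update_self ..
    · have hd_eq := hsum e
      rw [(mem_piAntidiag.1 he).1] at hd_eq
      dsimp only
      rw [hsum_update, Function.update_idem, Function.update_eq_iff]
      exact ⟨by omega, fun _ _ => rfl⟩
  · exact fun e _ => (hupdate e _).symm

theorem complete_eq_prod_geom_sum [CommSemiring R] {u : κ → R} {c₀ : κ} {K d : ℕ} (hone : u c₀ = 1)
    (hpow : ∀ c, c ≠ c₀ → u c ^ K = 0) (hd : Fintype.card κ * K ≤ d) :
    complete d u = ∏ c ∈ univ.erase c₀, ∑ k ∈ range K, u c ^ k := by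
  rw [prod_geom_sum]
  refine sum_piAntidiag_eq_sum_boundedExps (fun e a => ?_) (fun e c hc hK => ?_) hd
  · refine prod_congr rfl fun c _ => ?_
    rcases eq_or_ne c c₀ with rfl | hc
    · rw [hone, one_pow, one_pow]
    · rw [Function.update_of_ne hc]
  · exact prod_eq_zero (mem_univ c) (pow_eq_zero_of_le hK (hpow c hc))

end Geometric

section Weight

variable {ι : Type*} [Fintype ι] {N K : ℕ}

/-- The number of letters of a cell that are not the letter `1`. -/
def weight (c : ι → Option (Fin N)) : ℕ :=
  #{s | c s ≠ none}

theorem weight_eq_zero_iff {c : ι → Option (Fin N)} : weight c = 0 ↔ c = fun _ => none := by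
  simp [weight, filter_eq_empty_iff, funext_iff]

variable [DecidableEq ι]

theorem prod_weight_eq_one {M : Type*} [CommMonoid M] (f : (ι → Option (Fin N)) → M) :
    ∏ c with weight c = 1, f c = ∏ s, ∏ i, f (Function.update (fun _ => none) s (some i)) := by
  rw [← Fintype.prod_prod_type']
  refine (prod_nbij (fun p : ι × Fin N => Function.update (fun _ => none) p.1 (some p.2))
    ?_ ?_ ?_ fun _ _ => rfl).symm
  · rintro ⟨s, i⟩ -
    rw [mem_filter_univ, weight, card_eq_one]
    refine ⟨s, ext fun t => ?_⟩
    rcases eq_or_ne t s with rfl | ht <;> simp [*]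
  · rintro ⟨s, i⟩ - ⟨t, j⟩ - h
    have hs := congrFun h s
    rcases eq_or_ne s t with rfl | hst
    · simpa using hs
    · simp [hst] at hs
  · intro c hc
    obtain ⟨s, hs⟩ := card_eq_one.1 ((mem_filter_univ c).1 (mem_coe.1 hc))
    obtain ⟨i, hi⟩ :=
      Option.ne_none_iff_exists'.1 ((mem_filter_univ s).1 (hs ▸ mem_singleton_self s))
    refine ⟨(s, i), mem_coe.2 (mem_univ _), (Function.eq_update_iff.2 ⟨hi, fun t ht => ?_⟩).symm⟩
    by_contra hct
    exact ht (mem_singleton.1 (hs ▸ (mem_filter_univ t).2 hct))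

theorem pureTensor_eq_prod_slot (F : ι → MvPolynomial (Fin N) ℤ) :
    pureTensor K F = ∏ s, slot K s (F s) := by
  simp only [← pureTensor_mulSingle, ← map_prod, univ_prod_mulSingle]

theorem cellVar_eq_prod_slot (c : ι → Option (Fin N)) :
    cellVar K c = ∏ s, slot K s (letter (c s)) :=
  pureTensor_eq_prod_slot _

theorem pureTensor_prod_one_sub_X :
    (pureTensor K fun _ : ι => ∏ i : Fin N, (1 - X i)) =
      ∏ c with weight c = 1, (1 - cellVar K c) := by
  have hcell (s : ι) (i : Fin N) :
      cellVar K (Function.update (fun _ => none) s (some i)) = slot K s (X i) := by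
    rw [← pureTensor_mulSingle]
    refine congrArg (pureTensor K) (funext fun t => ?_)
    rcases eq_or_ne t s with rfl | ht <;> simp [*, letter]
  simp only [prod_weight_eq_one, hcell, pureTensor_eq_prod_slot, map_prod, map_sub, map_one]

theorem pureTensor_mul_complete {d : ℕ} (hd : Fintype.card (ι → Option (Fin N)) * K ≤ d) :
    (pureTensor K fun _ : ι => ∏ i : Fin N, (1 - X i)) * complete d (cellVar K) =
      ∏ c : ι → Option (Fin N) with 2 ≤ weight c, ∑ k ∈ range K, cellVar K c ^ k := by
  have hsplit : univ.erase (fun _ : ι => (none : Option (Fin N))) =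
      univ.filter (weight · = 1) ∪ univ.filter (2 ≤ weight ·) := by
    ext c
    simp only [mem_union, mem_filter_univ, mem_erase, mem_univ, and_true, Ne,
      ← weight_eq_zero_iff]
    omega
  have hdisj : Disjoint (univ.filter fun c : ι → Option (Fin N) => weight c = 1)
      (univ.filter (2 ≤ weight ·)) :=
    disjoint_filter.2 fun c _ hone htwo => by omega
  rw [complete_eq_prod_geom_sum cellVar_none (fun c hc => cellVar_pow_eq_zero hc) hd, hsplit,
    prod_union hdisj, pureTensor_prod_one_sub_X, ← mul_assoc, ← prod_mul_distrib, prod_eq_one,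
    one_mul]
  intro c hc
  have hc₀ : c ≠ fun _ => none := fun h => by
    rw [mem_filter_univ, weight_eq_zero_iff.2 h] at hc
    exact zero_ne_one hc
  rw [mul_neg_geom_sum, cellVar_pow_eq_zero hc₀, sub_zero]

end Weight

section Degree

variable {N K : ℕ}

theorem isHomogeneous_letter (o : Option (Fin N)) :
    (letter o).IsHomogeneous (if o = none then 0 else 1) := by
  cases o with
  | none => exact isHomogeneous_one _ _
  | some i => exact isHomogeneous_X _ i

section TensorDegree

variable {ι : Type*} [Fintype ι] [DecidableEq ι] {lam : ι → ℕ → ℕ}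

theorem tensorCoeff_prod_cellVar_pow (hlam : ∀ s, ∀ i : Fin N, lam s i + N ≤ K)
    (e : (ι → Option (Fin N)) → ℕ) :
    tensorCoeff hlam (∏ c, cellVar K c ^ e c) =
      ∏ s, schurCoeff N (lam s) (∏ c, letter (c s) ^ e c) := by
  simp only [cellVar, ← map_pow, ← map_prod, tensorCoeff_pureTensor, Finset.prod_apply,
    Pi.pow_apply]

theorem sum_eq_of_tensorCoeff_ne_zero {hlam : ∀ s, ∀ i : Fin N, lam s i + N ≤ K}
    {e : (ι → Option (Fin N)) → ℕ} (he : tensorCoeff hlam (∏ c, cellVar K c ^ e c) ≠ 0) (s : ι) :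
    ∑ c : ι → Option (Fin N), (if c s = none then 0 else 1) * e c = ∑ i : Fin N, lam s i := by
  rw [tensorCoeff_prod_cellVar_pow] at he
  by_contra hs
  exact he (prod_eq_zero (mem_univ s) (schurCoeff_eq_zero_of_isHomogeneous
    (.prod _ _ _ fun c _ => (isHomogeneous_letter (c s)).pow (e c)) hs))

end TensorDegree

variable {lam : Fin 3 → ℕ → ℕ}

theorem weight_eq_add (c : Fin 3 → Option (Fin N)) :
    weight c = (if c 0 = none then 0 else 1) + (if c 1 = none then 0 else 1) +
      (if c 2 = none then 0 else 1) := by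
  simp [weight, card_filter, Fin.sum_univ_three]

theorem eq_zero_of_tensorCoeff_ne_zero {hlam : ∀ s, ∀ i : Fin N, lam s i + N ≤ K}
    (hsize : ∑ i : Fin N, lam 2 i = ∑ i : Fin N, lam 0 i + ∑ i : Fin N, lam 1 i)
    {e : (Fin 3 → Option (Fin N)) → ℕ} (he : ∀ c, ¬2 ≤ weight c → e c = 0)
    (hne : tensorCoeff hlam (∏ c, cellVar K c ^ e c) ≠ 0) {c : Fin 3 → Option (Fin N)}
    (hc : ¬(weight c = 2 ∧ c 2 ≠ none)) : e c = 0 := by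
  have hle (c : Fin 3 → Option (Fin N)) (_ : c ∈ univ) : (if c 2 = none then 0 else 1) * e c ≤
      (if c 0 = none then 0 else 1) * e c + (if c 1 = none then 0 else 1) * e c := by
    have hweight := weight_eq_add c
    have hsmall := he c
    split_ifs at hweight ⊢ <;> omega
  have heq := hsize
  simp only [← sum_eq_of_tensorCoeff_ne_zero hne, ← sum_add_distrib] at heq
  have hcell := (sum_eq_sum_iff_of_le hle).1 heq c (mem_univ c)
  have hweight := weight_eq_add c
  have hsmall := he c
  by_cases hnone : c 2 = none
  all_goals
    simp only [hnone, ne_eq, not_true, not_false_eq_true, and_false, and_true, if_true, if_false]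
      at hc hcell hweight
    split_ifs at hweight hcell <;> omega

theorem tensorCoeff_prod_geom_sum (hlam : ∀ s, ∀ i : Fin N, lam s i + N ≤ K) (hK : 0 < K)
    (hsize : ∑ i : Fin N, lam 2 i = ∑ i : Fin N, lam 0 i + ∑ i : Fin N, lam 1 i) :
    tensorCoeff hlam (∏ c with 2 ≤ weight c, ∑ k ∈ range K, cellVar K c ^ k) =
      tensorCoeff hlam (∏ c with weight c = 2 ∧ c 2 ≠ none, ∑ k ∈ range K, cellVar K c ^ k) := by
  simp only [prod_geom_sum, map_sum]
  refine (sum_subset (fun e he => ?_) fun e he hne => ?_).symm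
  · simp only [mem_boundedExps, mem_filter_univ] at he ⊢
    refine ⟨fun c _ => ?_, fun c hc => he.2 c fun hmixed => hc hmixed.1.ge⟩
    by_cases hmixed : weight c = 2 ∧ c 2 ≠ none
    · exact he.1 c hmixed
    · exact (he.2 c hmixed).trans_lt hK
  · simp only [mem_boundedExps, mem_filter_univ] at he hne
    by_contra hcoeff
    exact hne ⟨fun c hmixed => he.1 c hmixed.1.ge,
      fun c hc => eq_zero_of_tensorCoeff_ne_zero hsize he.2 hcoeff hc⟩

end Degree

section Cauchy

theorem prod_prod_geom_sum {ι κ R : Type*} [Fintype ι] [DecidableEq ι] [Fintype κ] [DecidableEq κ]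
    [CommSemiring R] (K : ℕ) (a : ι → R) (b : κ → R) :
    ∏ i, ∏ k, ∑ r ∈ range K, (a i * b k) ^ r =
      ∑ Q ∈ Fintype.piFinset fun _ : ι => Fintype.piFinset fun _ : κ => range K,
        (∏ i, a i ^ ∑ k, Q i k) * ∏ k, b k ^ ∑ i, Q i k := by
  simp only [prod_univ_sum]
  refine sum_congr rfl fun Q _ => ?_
  simp only [mul_pow, prod_mul_distrib, prod_pow_eq_pow_sum]
  rw [prod_comm (f := fun i k => b k ^ Q i k)]
  simp only [prod_pow_eq_pow_sum]

variable {N K : ℕ} {lam : ℕ → ℕ}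

theorem schurCoeff_prod_X_pow (α : Fin N → ℕ) :
    schurCoeff N lam (∏ i, X i ^ α i) =
      ∑ w : Perm (Fin N), if ∀ i, (α i : ℤ) = lam i - i + w i then (Perm.sign w : ℤ) else 0 := by
  rw [schurCoeff_apply, vandermonde_eq_sum_perm, sum_mul, coeff_sum]
  refine sum_congr rfl fun w _ => ?_
  rw [smul_mul_assoc, coeff_smul, ← prod_mul_distrib]
  simp_rw [← pow_add]
  rw [prod_univ_X_pow, coeff_monomial, smul_eq_mul, mul_ite, mul_one, mul_zero]
  refine if_congr ?_ rfl rfl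
  simp only [DFunLike.ext_iff, staircase_apply, Finsupp.equivFunOnFinite_symm_apply_apply]
  refine forall_congr' fun i => ?_
  have := (w i).isLt
  omega

theorem hsymInt_eq_sum {z : ℤ} (hz : z < K) :
    hsymInt N z = ∑ q ∈ Fintype.piFinset fun _ : Fin N => range K,
      if ((∑ k, q k : ℕ) : ℤ) = z then ∏ k, X k ^ q k else 0 := by
  rcases lt_or_ge z 0 with hneg | hpos
  · rw [hsymInt, if_pos hneg, sum_eq_zero]
    exact fun q _ => if_neg (by omega)
  · lift z to ℕ using hpos
    rw [hsymInt, if_neg (by omega), Int.toNat_natCast, hsym, ← sum_filter]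
    refine sum_nbij' (fun e => e) Finsupp.equivFunOnFinite.symm (fun e he => ?_) (fun q hq => ?_)
      (fun e _ => Finsupp.equivFunOnFinite.symm_apply_apply e) (fun _ _ => rfl) (fun e _ => ?_)
    · obtain ⟨he, -⟩ := mem_finsuppAntidiag.1 he
      have hle (k : Fin N) : e k ≤ z := he ▸ single_le_sum (fun _ _ => Nat.zero_le _) (mem_univ k)
      simp only [mem_filter, Fintype.mem_piFinset, mem_range]
      exact ⟨fun k => (hle k).trans_lt (by omega), by exact_mod_cast he⟩
    · have hsum := (mem_filter.1 hq).2
      exact mem_finsuppAntidiag.2 ⟨by simpa using mod_cast hsum, subset_univ _⟩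
    · rw [prod_univ_X_pow]
      simp

/-- By the Jacobi–Trudi formula, `s_lam` is the multiplicity of `s_lam` in the Cauchy kernel
`∏ i, ∏ k, (1 - x_i y_k)⁻¹`. -/
theorem schur_eq_sum (hlam : ∀ i : Fin N, lam i + N ≤ K) :
    schur N lam = ∑ Q ∈ Fintype.piFinset fun _ : Fin N => Fintype.piFinset fun _ : Fin N => range K,
      schurCoeff N lam (∏ i, X i ^ ∑ k, Q i k) • ∏ k, X k ^ ∑ i, Q i k := by
  have hentry (w : Perm (Fin N)) (i : Fin N) : ((lam i : ℤ) - i + w i) < K := by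
    have := hlam i
    omega
  have hrow (w : Perm (Fin N)) : ∏ i : Fin N, hsymInt N (lam i - i + w i) =
      ∑ Q ∈ Fintype.piFinset fun _ : Fin N => Fintype.piFinset fun _ : Fin N => range K,
        if ∀ i, ((∑ k, Q i k : ℕ) : ℤ) = lam i - i + w i then ∏ k, X k ^ ∑ i, Q i k else 0 := by
    simp only [hsymInt_eq_sum (hentry w _), prod_univ_sum, prod_ite_zero, mem_univ, true_imp_iff,
      ← prod_pow_eq_pow_sum]
    exact sum_congr rfl fun Q _ => by rw [prod_comm]
  rw [schur, ← Matrix.det_transpose, Matrix.det_apply]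
  simp only [Matrix.transpose_apply, Matrix.of_apply, hrow, schurCoeff_prod_X_pow, sum_smul,
    smul_sum]
  rw [sum_comm]
  refine sum_congr rfl fun Q _ => sum_congr rfl fun w _ => ?_
  split_ifs with h <;> simp [Units.smul_def]

end Cauchy

section Mixed

variable {N K : ℕ}

theorem prod_weight_eq_two_and_ne_none {M : Type*} [CommMonoid M]
    (f : (Fin 3 → Option (Fin N)) → M) :
    ∏ c with weight c = 2 ∧ c 2 ≠ none, f c =
      (∏ i, ∏ k, f ![some i, none, some k]) * ∏ j, ∏ k, f ![none, some j, some k] := by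
  have hsum : (∏ i, ∏ k, f ![some i, none, some k]) * ∏ j, ∏ k, f ![none, some j, some k] =
      ∏ p : (Fin N ⊕ Fin N) × Fin N, f ![p.1.getLeft?, p.1.getRight?, some p.2] := by
    rw [Fintype.prod_prod_type, Fintype.prod_sum_type]
    rfl
  rw [hsum]
  refine (prod_nbij
    (fun p : (Fin N ⊕ Fin N) × Fin N => ![p.1.getLeft?, p.1.getRight?, some p.2])
    ?_ ?_ ?_ fun _ _ => rfl).symm
  · rintro ⟨i | i, k⟩ - <;> simp [weight_eq_add]
  · rintro ⟨i | i, k⟩ - ⟨i' | i', k'⟩ - h <;> simp_all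
  · intro c hc
    replace hc := (mem_filter_univ c).1 (mem_coe.1 hc)
    rw [weight_eq_add] at hc
    have hc_eq : c = ![c 0, c 1, c 2] := funext fun s => by fin_cases s <;> rfl
    rcases h₀ : c 0 with _ | i <;> rcases h₁ : c 1 with _ | j <;> rcases h₂ : c 2 with _ | k <;>
      simp only [h₀, h₁, h₂] at hc hc_eq <;> simp at hc
    · exact ⟨(.inr j, k), mem_coe.2 (mem_univ _), hc_eq.symm⟩
    · exact ⟨(.inl i, k), mem_coe.2 (mem_univ _), hc_eq.symm⟩

variable {lam : Fin 3 → ℕ → ℕ}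

theorem prod_prod_geom_sum_slot {ι : Type*} [DecidableEq ι] (s t : ι) :
    ∏ i : Fin N, ∏ k : Fin N, ∑ r ∈ range K, (slot K s (X i) * slot K t (X k)) ^ r =
      ∑ Q ∈ Fintype.piFinset fun _ : Fin N => Fintype.piFinset fun _ : Fin N => range K,
        slot K s (∏ i, X i ^ ∑ k, Q i k) * slot K t (∏ k, X k ^ ∑ i, Q i k) := by
  simp only [prod_prod_geom_sum, map_prod, map_pow]

theorem tensorCoeff_prod_weight_eq_two_and_ne_none (hlam : ∀ s, ∀ i : Fin N, lam s i + N ≤ K) :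
    tensorCoeff hlam (∏ c with weight c = 2 ∧ c 2 ≠ none, ∑ k ∈ range K, cellVar K c ^ k) =
      schurCoeff N (lam 2) (schur N (lam 0) * schur N (lam 1)) := by
  have hleft (i k : Fin N) :
      cellVar K ![some i, none, some k] = slot K 0 (X i) * slot K 2 (X k) := by
    simp [cellVar_eq_prod_slot, Fin.prod_univ_three, letter]
  have hright (j k : Fin N) :
      cellVar K ![none, some j, some k] = slot K 1 (X j) * slot K 2 (X k) := by
    simp [cellVar_eq_prod_slot, Fin.prod_univ_three, letter]
  have hcoeff (F G H H' : MvPolynomial (Fin N) ℤ) :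
      tensorCoeff hlam (slot K 0 F * slot K 2 H * (slot K 1 G * slot K 2 H')) =
        schurCoeff N (lam 0) F * schurCoeff N (lam 1) G * schurCoeff N (lam 2) (H * H') := by
    have := tensorCoeff_pureTensor hlam ![F, G, H * H']
    simp only [pureTensor_eq_prod_slot, Fin.prod_univ_three, Matrix.cons_val, map_mul] at this
    rw [mul_mul_mul_comm, this]
  simp only [prod_weight_eq_two_and_ne_none, hleft, hright, prod_prod_geom_sum_slot,
    sum_mul_sum, map_sum, hcoeff]
  simp only [schur_eq_sum (hlam 0), schur_eq_sum (hlam 1), sum_mul_sum, map_sum,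
    smul_mul_smul_comm, map_smul, smul_eq_mul]

end Mixed

section Kronecker

variable {N K d : ℕ} {l : Fin 3 → ℕ →₀ ℕ}

theorem gKron_pad_eq_tensorCoeff (hlam : ∀ s, ∀ i : Fin N, l s i + N ≤ K)
    (hl : ∀ s i, N ≤ i → l s i = 0) (hd : ∀ s, psize (l s) ≤ d) (hN : N + 1 ≤ d) :
    gKron d (pad (l 0) d) (pad (l 1) d) (pad (l 2) d) =
      tensorCoeff hlam ((pureTensor K fun _ => ∏ i, (1 - X i)) * complete d (cellVar K)) := by
  have hsum := sum_prod_chi_pad hlam hl hd hN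
  simp only [Fin.prod_univ_three] at hsum
  rw [gKron, hsum, Int.mul_ediv_cancel_left _ (mod_cast d.factorial_ne_zero)]

theorem gKron_pad_eq_lrCoeff (hl : ∀ s i, N ≤ i → l s i = 0)
    (hsize : psize (l 2) = psize (l 0) + psize (l 1)) (hK : ∀ s, psize (l s) + N < K)
    (hd : (Fintype.card (Fin 3 → Option (Fin N)) + 1) * K ≤ d) :
    gKron d (pad (l 0) d) (pad (l 1) d) (pad (l 2) d) = lrCoeff N (l 0) (l 1) (l 2) := by
  have hlam (s : Fin 3) (i : Fin N) : l s i + N ≤ K := by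
    have hle : l s i ≤ ∑ i : Fin N, l s i :=
      single_le_sum (f := fun i : Fin N => l s i) (fun _ _ => Nat.zero_le _) (mem_univ i)
    have := hK s
    rw [psize_eq_sum (hl s)] at this
    omega
  have hKd : Fintype.card (Fin 3 → Option (Fin N)) * K + K ≤ d := by rwa [← Nat.succ_mul]
  have hsum : ∑ i : Fin N, l 2 i = ∑ i : Fin N, l 0 i + ∑ i : Fin N, l 1 i := by
    simpa only [psize_eq_sum (hl _)] using hsize
  calc gKron d (pad (l 0) d) (pad (l 1) d) (pad (l 2) d)
      = tensorCoeff hlam ((pureTensor K fun _ => ∏ i, (1 - X i)) * complete d (cellVar K)) :=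
        gKron_pad_eq_tensorCoeff hlam hl (fun s => by have := hK s; omega)
          (by have := hK 0; omega)
    _ = tensorCoeff hlam (∏ c with 2 ≤ weight c, ∑ k ∈ range K, cellVar K c ^ k) := by
        rw [pureTensor_mul_complete (by omega)]
    _ = tensorCoeff hlam
          (∏ c with weight c = 2 ∧ c 2 ≠ none, ∑ k ∈ range K, cellVar K c ^ k) :=
        tensorCoeff_prod_geom_sum hlam ((Nat.zero_le _).trans_lt (hK 0)) hsum
    _ = schurCoeff N (l 2) (schur N (l 0) * schur N (l 1)) :=
        tensorCoeff_prod_weight_eq_two_and_ne_none hlam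
    _ = lrCoeff N (l 0) (l 1) (l 2) := by rw [schurCoeff_apply, lrCoeff, mul_assoc]

end Kronecker

end MurnaghanLittlewood

theorem murnaghan_littlewood_general (l m n : ℕ →₀ ℕ) (hsize : psize n = psize l + psize m)
    (nv : ℕ) (hlv : ∀ i, nv ≤ i → l i = 0) (hmv : ∀ i, nv ≤ i → m i = 0)
    (hnv : ∀ i, nv ≤ i → n i = 0) :
    ∃ D : ℕ, ∀ d : ℕ, D ≤ d →
      gKron d (pad l d) (pad m d) (pad n d) = lrCoeff nv l m n := by
  refine ⟨(Fintype.card (Fin 3 → Option (Fin nv)) + 1) * (psize n + nv + 1), fun d hd => ?_⟩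
  refine MurnaghanLittlewood.gKron_pad_eq_lrCoeff (l := ![l, m, n]) (fun s => ?_) hsize
    (fun s => ?_) hd
  · fin_cases s
    exacts [hlv, hmv, hnv]
  · fin_cases s <;> simp only [Fin.reduceFinMk, Matrix.cons_val] <;> omega

/-- Murnaghan–Littlewood theorem in stable form: if `|ν| = |λ| + |μ|` then for all `d`
large enough, `g_{λ[d],μ[d]}^{ν[d]} = c_{λμ}^ν`, i.e. `ḡ_{λμ}^ν = c_{λμ}^ν`. -/
theorem murnaghan_littlewood (l m n : ℕ →₀ ℕ) (hl : IsPtn l) (hm : IsPtn m)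
    (hn : IsPtn n) (hsize : psize n = psize l + psize m)
    (nv : ℕ) (hlv : ∀ i, nv ≤ i → l i = 0) (hmv : ∀ i, nv ≤ i → m i = 0)
    (hnv : ∀ i, nv ≤ i → n i = 0) :
    ∃ D : ℕ, ∀ d : ℕ, D ≤ d →
      gKron d (pad l d) (pad m d) (pad n d) = lrCoeff nv l m n :=
  murnaghan_littlewood_general l m n hsize nv hlv hmv hnv
end
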